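/- arXiv:2501.09599 — 3 statements merged into one kernel-verified Lean document; each statement's English description precedes it below -/
import Mathlib

section
/- Let μ be a non-atomic self-conformal measure on ℝ (i.e. d = 1). Then there exists α > 0 such that μ(W(Ψ)) = 0 for every decreasing function Ψ : ℕ → (0,∞) satisfying ∑_{n=1}^∞ n^{2α−1} Ψ(n)^α < ∞. -/
noncomputable section
open MeasureTheory Metric Filter Topology

variable {E : Type*} [NormedAddCommGroup E] [NormedSpace ℝ E]

/-- `f` is a contraction with ratio `r ∈ (0,1)`. -/
def IsContractionWith (r : ℝ) (f : E → E) : Prop :=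
  0 < r ∧ r < 1 ∧ ∀ x y, ‖f x - f y‖ ≤ r * ‖x - y‖

/-- `f` is a contracting similarity with ratio `r ∈ (0,1)`. -/
def IsSimilarityWith (r : ℝ) (f : E → E) : Prop :=
  0 < r ∧ r < 1 ∧ ∀ x y, ‖f x - f y‖ = r * ‖x - y‖

/-- A self-conformal IFS. -/
def IsSelfConformalIFS {A : Type*} [Fintype A] (φ : A → E → E) : Prop :=
  2 ≤ Fintype.card A ∧
  (∀ a, ∃ r, IsContractionWith r (φ a)) ∧
  (∀ a, ContDiff ℝ 1 (φ a)) ∧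
  (∀ a x, 0 < ‖fderiv ℝ (φ a) x‖ ∧ ∀ v, ‖fderiv ℝ (φ a) x v‖ = ‖fderiv ℝ (φ a) x‖ * ‖v‖) ∧
  (∃ H α₀ : ℝ, 0 < H ∧ 0 < α₀ ∧ ∀ a x y,
    |‖fderiv ℝ (φ a) x‖ - ‖fderiv ℝ (φ a) y‖| ≤ H * ‖x - y‖ ^ α₀) ∧
  (∃ a₁ a₂ x₁ x₂, φ a₁ x₁ = x₁ ∧ φ a₂ x₂ = x₂ ∧ x₁ ≠ x₂)

/-- A self-similar IFS. -/
def IsSelfSimilarIFS {A : Type*} [Fintype A] (φ : A → E → E) : Prop :=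
  2 ≤ Fintype.card A ∧
  (∀ a, ∃ r, IsSimilarityWith r (φ a)) ∧
  (∃ a₁ a₂ x₁ x₂, φ a₁ x₁ = x₁ ∧ φ a₂ x₂ = x₂ ∧ x₁ ≠ x₂)

/-- The IFS is affinely irreducible: no (nonempty) proper affine subspace is preserved. -/
def AffinelyIrreducible {A : Type*} (φ : A → E → E) : Prop :=
  ¬ ∃ W : AffineSubspace ℝ E, (W : Set E).Nonempty ∧ W ≠ ⊤ ∧
      ∀ a, φ a '' (W : Set E) ⊆ (W : Set E)

/-- Closed `ε`-neighbourhood of an affine subspace. -/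
def affNbhd (W : AffineSubspace ℝ E) (ε : ℝ) : Set E :=
  {y | Metric.infDist y (W : Set E) ≤ ε}

/-- topological support of a measure -/
def msupport [MeasurableSpace E] (μ : Measure E) : Set E :=
  {x | ∀ r : ℝ, 0 < r → 0 < μ (Metric.ball x r)}

/-- distance between two sets -/
def setDist (S T : Set E) : ℝ := sInf (Set.image2 dist S T)

/-- map corresponding to a finite word (as a list) -/
def listMap {A : Type*} (φ : A → E → E) : List A → E → E
  | [] => id
  | a :: l => φ a ∘ listMap φ l

/-- map corresponding to the first `n` letters of an infinite word -/
def wordMap {A : Type*} (φ : A → E → E) : ℕ → (ℕ → A) → E → E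
  | 0, _ => id
  | n + 1, a => φ (a 0) ∘ wordMap φ n (fun k => a (k + 1))

/-- set of `Ψ`-well-approximable vectors in `ℝ^d` -/
def WApprox (d : ℕ) (Ψ : ℕ → ℝ) : Set (EuclideanSpace ℝ (Fin d)) :=
  {x | {pq : (Fin d → ℤ) × ℕ | 0 < pq.2 ∧
        ∀ i, |x i - (pq.1 i : ℝ) / (pq.2 : ℝ)| ≤ Ψ pq.2}.Infinite}

/-- set of singular vectors in `ℝ^d` -/
def Sing (d : ℕ) : Set (EuclideanSpace ℝ (Fin d)) :=
  {x | ∀ c : ℝ, 0 < c → ∃ T : ℝ, 0 < T ∧ ∀ t : ℝ, T ≤ t →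
    ∃ q : ℕ, 0 < q ∧ (q : ℝ) < t ∧
      ∀ i, |(q : ℝ) * x i - round ((q : ℝ) * x i)| ≤ c * t ^ (-(1 : ℝ) / (d : ℝ))}


structure GoodIFS {A : Type*} (φ : A → ℝ → ℝ) (R r l K β : ℝ) : Prop where
  hR : 1 ≤ R
  hr0 : 0 < r
  hr1 : r < 1
  hl0 : 0 < l
  hl1 : l ≤ 1
  hK : 0 ≤ K
  hβ : 0 < β
  cont : ∀ a, Continuous (φ a)
  maps : ∀ a x, |x| ≤ R → |φ a x| ≤ R
  contr : ∀ a x y, |φ a x - φ a y| ≤ r * |x - y|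
  low : ∀ a x y, |x| ≤ R → |y| ≤ R → l * |x - y| ≤ |φ a x - φ a y|
  dist1 : ∀ a T X Y U V, |X| ≤ R → |Y| ≤ R → |U| ≤ R → |V| ≤ R →
    |X - U| ≤ T → |X - V| ≤ T → |Y - U| ≤ T → |Y - V| ≤ T →
    |φ a X - φ a Y| * |U - V| ≤ (1 + K * T ^ β) * (|φ a U - φ a V| * |X - Y|)

lemma stat_real {A : Type*} [Fintype A] (φ : A → ℝ → ℝ) (hc : ∀ a, Continuous (φ a))
    (p : A → ℝ) (hp : ∀ a, 0 < p a)
    (μ : Measure ℝ) [IsProbabilityMeasure μ]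
    (hstat : μ = ∑ a, ENNReal.ofReal (p a) • Measure.map (φ a) μ) (S : Set ℝ)
    (hS : MeasurableSet S) : μ.real S = ∑ a, p a * μ.real (φ a ⁻¹' S) := by
  have h : μ S = ∑ a, ENNReal.ofReal (p a) * μ (φ a ⁻¹' S) := by
    conv_lhs => rw [hstat]
    rw [Measure.finsetSum_apply]
    refine Finset.sum_congr rfl fun a _ => ?_
    rw [Measure.smul_apply, Measure.map_apply (hc a).measurable hS, smul_eq_mul]
  rw [measureReal_def, h, ENNReal.toReal_sum]
  · refine Finset.sum_congr rfl fun a _ => ?_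
    rw [ENNReal.toReal_mul, ENNReal.toReal_ofReal (hp a).le, measureReal_def]
  · intro a _
    exact ENNReal.mul_ne_top ENNReal.ofReal_ne_top (measure_ne_top _ _)

lemma mass_ball {A : Type*} [Fintype A] (φ : A → ℝ → ℝ) (hc : ∀ a, Continuous (φ a))
    (p : A → ℝ) (hp : ∀ a, 0 < p a) (hp1 : ∑ a, p a = 1)
    (μ : Measure ℝ) [IsProbabilityMeasure μ]
    (hstat : μ = ∑ a, ENNReal.ofReal (p a) • Measure.map (φ a) μ) (r T : ℝ)
    (hr0 : 0 < r) (hr1 : r < 1) (h : ∀ a x s, |x| ≤ T + s → |φ a x| ≤ T + r * s) :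
    μ.real {x | |x| ≤ T + 1} = 1 := by
  have hm : ∀ s, MeasurableSet {x : ℝ | |x| ≤ s} := fun s =>
    measurableSet_le measurable_norm measurable_const
  have step : ∀ s, μ.real {x | |x| ≤ T + s} ≤ μ.real {x | |x| ≤ T + r * s} := by
    intro s
    rw [stat_real φ hc p hp μ hstat _ (hm (T + r * s))]
    calc μ.real {x | |x| ≤ T + s} = ∑ a, p a * μ.real {x | |x| ≤ T + s} := by
          rw [← Finset.sum_mul, hp1, one_mul]
      _ ≤ _ := by
          refine Finset.sum_le_sum fun a _ => ?_
          refine mul_le_mul_of_nonneg_left ?_ (hp a).le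
          exact measureReal_mono (fun x hx => h a x s hx)
  have it : ∀ n : ℕ, ∀ s, μ.real {x | |x| ≤ T + s} ≤ μ.real {x | |x| ≤ T + r ^ n * s} := by
    intro n
    induction n with
    | zero => intro s; simp
    | succ n ih =>
      intro s
      have := (ih s).trans (step (r ^ n * s))
      rwa [← mul_assoc, ← pow_succ'] at this
  have hN : ∀ N : ℕ, μ.real {x | |x| ≤ (N : ℝ)} ≤ μ.real {x | |x| ≤ T + 1} := by
    intro N
    by_cases hT : (N : ℝ) - T ≤ 0
    · refine measureReal_mono (fun x hx => ?_)
      simp only [Set.mem_ofPred_eq] at *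
      linarith
    · obtain ⟨n, hn⟩ := exists_pow_lt_of_lt_one (show (0 : ℝ) < 1 / (N - T) by
        push Not at hT; positivity) hr1
      have := it n (N - T)
      rw [show T + (N - T) = (N : ℝ) by ring] at this
      refine this.trans (measureReal_mono (fun x hx => ?_))
      simp only [Set.mem_ofPred_eq] at *
      push Not at hT
      rw [lt_div_iff₀ hT] at hn
      linarith
  have hU : (⋃ N : ℕ, {x : ℝ | |x| ≤ (N : ℝ)}) = Set.univ := by
    ext x
    simp only [Set.mem_iUnion, Set.mem_ofPred_eq, Set.mem_univ, iff_true]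
    exact exists_nat_ge _
  have ht := tendsto_measure_iUnion_atTop (μ := μ) (s := fun N : ℕ => {x : ℝ | |x| ≤ (N : ℝ)})
    (fun a b hab x hx => le_trans (show |x| ≤ (a : ℝ) from hx) (by exact_mod_cast hab))
  rw [hU, measure_univ] at ht
  have ht' : Tendsto (fun N : ℕ => μ.real {x | |x| ≤ (N : ℝ)}) atTop (𝓝 1) := by
    have := (ENNReal.tendsto_toReal ENNReal.one_ne_top).comp ht
    rw [ENNReal.toReal_one] at this
    exact this
  exact le_antisymm measureReal_le_one (le_of_tendsto' ht' hN)

lemma mvt_abs (f : ℝ → ℝ) (hf : Differentiable ℝ f) (x y : ℝ) :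
    ∃ z ∈ Set.uIcc x y, |f x - f y| = |deriv f z| * |x - y| := by
  rcases lt_trichotomy x y with h | h | h
  · obtain ⟨z, hz, he⟩ := exists_deriv_eq_slope f h hf.continuous.continuousOn
      hf.differentiableOn
    refine ⟨z, ?_, ?_⟩
    · rw [Set.uIcc_of_le h.le]; exact ⟨hz.1.le, hz.2.le⟩
    · rw [he, ← abs_mul, abs_sub_comm, ← abs_neg (_ * _)]
      have : y - x ≠ 0 := by linarith
      congr 1; field_simp; ring
  · subst h; exact ⟨x, by simp, by simp⟩
  · obtain ⟨z, hz, he⟩ := exists_deriv_eq_slope f h hf.continuous.continuousOn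
      hf.differentiableOn
    refine ⟨z, ?_, ?_⟩
    · rw [Set.uIcc_of_ge h.le]; exact ⟨hz.1.le, hz.2.le⟩
    · rw [he, ← abs_mul]
      have : x - y ≠ 0 := by linarith
      congr 1; field_simp

lemma uIcc_bd {x y z R : ℝ} (hx : |x| ≤ R) (hy : |y| ≤ R) (hz : z ∈ Set.uIcc x y) : |z| ≤ R := by
  rw [abs_le] at *
  rw [Set.mem_uIcc] at hz
  constructor <;> rcases hz with h | h <;> linarith [h.1, h.2]

lemma good_of {A : Type*} [Fintype A] (φ : A → ℝ → ℝ) (hΦ : IsSelfConformalIFS φ)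
    (p : A → ℝ) (hp : ∀ a, 0 < p a) (hp1 : ∑ a, p a = 1)
    (μ : Measure ℝ) [IsProbabilityMeasure μ]
    (hstat : μ = ∑ a, ENNReal.ofReal (p a) • Measure.map (φ a) μ) :
    ∃ R r l K β, GoodIFS φ R r l K β ∧ μ.real {x | |x| ≤ R} = 1 := by
  obtain ⟨hcard, hcontr, hdiff, hconf, ⟨H, β, hH, hβ, hHol⟩, -⟩ := hΦ
  have : Nonempty A := Fintype.card_pos_iff.1 (by omega)
  choose rr hrr using hcontr
  obtain ⟨a₀, ha₀⟩ := Finite.exists_max rr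
  obtain ⟨b₀, hb₀⟩ := Finite.exists_max (fun a => |φ a 0|)
  set r := rr a₀ with hr
  have hr0 : 0 < r := (hrr a₀).1
  have hr1 : r < 1 := (hrr a₀).2.1
  have contr : ∀ a x y, |φ a x - φ a y| ≤ r * |x - y| := fun a x y =>
    ((hrr a).2.2 x y).trans (mul_le_mul_of_nonneg_right (ha₀ a) (abs_nonneg _))
  have hc : ∀ a, Continuous (φ a) := fun a => (hdiff a).continuous
  have hd : ∀ a, Differentiable ℝ (φ a) := fun a => (hdiff a).differentiable (by norm_num)
  set T := |φ b₀ 0| / (1 - r) with hT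
  have h1r : 0 < 1 - r := by linarith
  have hT0 : 0 ≤ T := by positivity
  have hTe : T * (1 - r) = |φ b₀ 0| := by rw [hT]; field_simp
  have hb : ∀ a x, |φ a x| ≤ r * |x| + T * (1 - r) := by
    intro a x
    have h1 := contr a x 0
    have h2 := hb₀ a
    simp only [sub_zero] at h1 h2
    have h3 := abs_add_le (φ a x - φ a 0) (φ a 0)
    rw [sub_add_cancel] at h3
    linarith
  have hs : ∀ a x s, |x| ≤ T + s → |φ a x| ≤ T + r * s := by
    intro a x s hx
    have := hb a x
    nlinarith
  have hder : ∀ a x, 0 < |deriv (φ a) x| := by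
    intro a x
    have := (hconf a x).1
    rwa [← norm_deriv_eq_norm_fderiv] at this
  have hder' : ∀ a x y, |deriv (φ a) x| ≤ |deriv (φ a) y| + H * |x - y| ^ β := by
    intro a x y
    have := hHol a x y
    rw [← norm_deriv_eq_norm_fderiv, ← norm_deriv_eq_norm_fderiv] at this
    have := (abs_le.1 this).2
    simp only [Real.norm_eq_abs] at this
    linarith
  have hmin : ∀ a, ∃ l > 0, ∀ x, |x| ≤ T + 1 → l ≤ |deriv (φ a) x| := by
    intro a
    obtain ⟨x, hx, hmn⟩ := (isCompact_Icc (a := -(T+1)) (b := T+1)).exists_isMinOn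
      ⟨0, by constructor <;> linarith⟩
      ((((hdiff a).continuous_deriv (by norm_num)).abs).continuousOn)
    exact ⟨_, hder a x, fun y hy => hmn (abs_le.1 hy)⟩
  choose ll hll0 hll using hmin
  obtain ⟨c₀, hc₀⟩ := Finite.exists_min ll
  set l := min (ll c₀) 1 with hl
  have hl0 : 0 < l := lt_min (hll0 c₀) one_pos
  have hlow : ∀ a x, |x| ≤ T + 1 → l ≤ |deriv (φ a) x| := fun a x hx =>
    (min_le_left _ _).trans ((hc₀ a).trans (hll a x hx))
  refine ⟨T + 1, r, l, H / l, β, ?_, mass_ball φ hc p hp hp1 μ hstat r T hr0 hr1 hs⟩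
  refine ⟨by linarith, hr0, hr1, hl0, min_le_right _ _, by positivity, hβ, hc, ?_, contr, ?_, ?_⟩
  · intro a x hx
    have := hs a x 1 hx
    linarith
  · intro a x y hx hy
    obtain ⟨z, hz, he⟩ := mvt_abs (φ a) (hd a) x y
    rw [he]
    exact mul_le_mul_of_nonneg_right (hlow a z (uIcc_bd hx hy hz)) (abs_nonneg _)
  · intro a τ X Y U V hX hY hU hV h1 h2 h3 h4
    obtain ⟨z, hz, he⟩ := mvt_abs (φ a) (hd a) X Y
    obtain ⟨w, hw, he'⟩ := mvt_abs (φ a) (hd a) U V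
    have hzw : |z - w| ≤ τ := by
      rw [abs_le] at h1 h2 h3 h4 ⊢
      rw [Set.mem_uIcc] at hz hw
      rcases hz with hz | hz <;> rcases hw with hw | hw <;> constructor <;>
        linarith [hz.1, hz.2, hw.1, hw.2, h1.1, h1.2, h2.1, h2.2, h3.1, h3.2, h4.1, h4.2]
    have hτ : 0 ≤ τ := (abs_nonneg _).trans hzw
    have hpow : |z - w| ^ β ≤ τ ^ β := Real.rpow_le_rpow (abs_nonneg _) hzw hβ.le
    have hwl := hlow a w (uIcc_bd hU hV hw)
    have key : |deriv (φ a) z| ≤ (1 + H / l * τ ^ β) * |deriv (φ a) w| := by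
      have e1 := hder' a z w
      have e2 : H * |z - w| ^ β ≤ H * τ ^ β := by gcongr
      have e3 : H / l * τ ^ β * l ≤ H / l * τ ^ β * |deriv (φ a) w| := by gcongr
      have e4 : H / l * τ ^ β * l = H * τ ^ β := by field_simp
      linarith
    rw [he, he']
    calc |deriv (φ a) z| * |X - Y| * |U - V| ≤ ((1 + H / l * τ ^ β) * |deriv (φ a) w|) * |X - Y| * |U - V| := by gcongr
      _ = _ := by ring

lemma real_inter_ball (μ : Measure ℝ) [IsProbabilityMeasure μ] (R : ℝ)
    (hB : μ.real {x | |x| ≤ R} = 1) (S : Set ℝ) :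
    μ.real S = μ.real (S ∩ {x | |x| ≤ R}) := by
  have hm : MeasurableSet {x : ℝ | |x| ≤ R} := measurableSet_le measurable_norm measurable_const
  have h0 : μ.real {x | |x| ≤ R}ᶜ = 0 := by
    rw [probReal_compl_eq_one_sub hm, hB, sub_self]
  refine le_antisymm ?_ (measureReal_mono Set.inter_subset_left)
  have := measureReal_inter_add_sdiff (μ := μ) (s := S) hm
  have h2 : μ.real (S \ {x | |x| ≤ R}) ≤ μ.real {x | |x| ≤ R}ᶜ :=
    measureReal_mono (fun x hx => hx.2)
  linarith

lemma miss_bound {A : Type*} [Fintype A] (φ : A → ℝ → ℝ) {R r l K β : ℝ}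
    (hG : GoodIFS φ R r l K β)
    (p : A → ℝ) (hp : ∀ a, 0 < p a) (hp1 : ∑ a, p a = 1)
    (μ : Measure ℝ) [IsProbabilityMeasure μ]
    (hstat : μ = ∑ a, ENNReal.ofReal (p a) • Measure.map (φ a) μ)
    (hB : μ.real {x | |x| ≤ R} = 1) (a : A) (s m : ℝ) (hs : 0 ≤ s)
    (hbd : ∀ S : Set ℝ, MeasurableSet S → S ⊆ {x | |x| ≤ R} →
      (∀ x ∈ S, ∀ y ∈ S, |x - y| ≤ s) → μ.real S ≤ m) (n : ℕ) :
    ∀ S : Set ℝ, MeasurableSet S → S ⊆ {x | |x| ≤ R} →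
      (∀ x ∈ S, ∀ y ∈ S, |x - y| ≤ l ^ n * s) →
      (∀ x, |x| ≤ R → (φ a)^[n] x ∉ S) → μ.real S ≤ (1 - p a ^ n) * m := by
  classical
  have hm : MeasurableSet {x : ℝ | |x| ≤ R} := measurableSet_le measurable_norm measurable_const
  induction n with
  | zero =>
    intro S _ hSB _ hmiss
    have : S = ∅ := by
      ext x
      simp only [Set.mem_empty_iff_false, iff_false]
      intro hx
      exact hmiss x (hSB hx) hx
    simp [this]
  | succ n ih =>
    intro S hS hSB hd hmiss
    have hl0 := hG.hl0
    have hpre : ∀ b, MeasurableSet (φ b ⁻¹' S ∩ {x | |x| ≤ R}) := fun b =>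
      ((hG.cont b).measurable hS).inter hm
    have hdi : ∀ b, ∀ x ∈ φ b ⁻¹' S ∩ {x | |x| ≤ R}, ∀ y ∈ φ b ⁻¹' S ∩ {x | |x| ≤ R},
        |x - y| ≤ l ^ n * s := by
      intro b x hx y hy
      have h1 := hd _ hx.1 _ hy.1
      have h2 := hG.low b x y hx.2 hy.2
      have h3 : l * |x - y| ≤ l * (l ^ n * s) := by
        rw [← mul_assoc, ← pow_succ']; exact h2.trans h1
      exact le_of_mul_le_mul_left h3 hl0
    have hA : μ.real (φ a ⁻¹' S) ≤ (1 - p a ^ n) * m := by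
      rw [real_inter_ball μ R hB]
      refine ih _ (hpre a) Set.inter_subset_right (hdi a) ?_
      intro x hx hmem
      refine hmiss x hx ?_
      rw [Function.iterate_succ_apply']
      exact hmem.1
    have hO : ∀ b, μ.real (φ b ⁻¹' S) ≤ m := by
      intro b
      rw [real_inter_ball μ R hB]
      refine hbd _ (hpre b) Set.inter_subset_right fun x hx y hy => (hdi b x hx y hy).trans ?_
      have : l ^ n ≤ 1 := pow_le_one₀ hl0.le hG.hl1
      nlinarith
    rw [stat_real φ hG.cont p hp μ hstat S hS]
    rw [← Finset.add_sum_erase _ _ (Finset.mem_univ a)] at hp1 ⊢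
    have h1 : ∑ b ∈ Finset.univ.erase a, p b * μ.real (φ b ⁻¹' S)
        ≤ (∑ b ∈ Finset.univ.erase a, p b) * m := by
      rw [Finset.sum_mul]
      exact Finset.sum_le_sum fun b _ => mul_le_mul_of_nonneg_left (hO b) (hp b).le
    have h2 : p a * μ.real (φ a ⁻¹' S) ≤ p a * ((1 - p a ^ n) * m) :=
      mul_le_mul_of_nonneg_left hA (hp a).le
    have h3 : (∑ b ∈ Finset.univ.erase a, p b) = 1 - p a := by linarith
    rw [h3] at h1
    calc _ ≤ p a * ((1 - p a ^ n) * m) + (1 - p a) * m := add_le_add h2 h1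
      _ = _ := by ring

lemma iterate_close {A : Type*} (φ : A → ℝ → ℝ) {R r l K β : ℝ}
    (hG : GoodIFS φ R r l K β) (a : A) (x₁ : ℝ) (h : φ a x₁ = x₁) (x : ℝ) (n : ℕ) :
    |(φ a)^[n] x - x₁| ≤ r ^ n * |x - x₁| := by
  induction n with
  | zero => simp
  | succ n ih =>
    rw [Function.iterate_succ_apply']
    have h1 := hG.contr a ((φ a)^[n] x) x₁
    rw [h] at h1
    refine h1.trans ?_
    rw [pow_succ', mul_assoc]
    exact mul_le_mul_of_nonneg_left ih hG.hr0.le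

lemma frostman {A : Type*} [Fintype A] (φ : A → ℝ → ℝ) {R r l K β : ℝ}
    (hG : GoodIFS φ R r l K β) (hfix : ∃ a₁ a₂ x₁ x₂, φ a₁ x₁ = x₁ ∧ φ a₂ x₂ = x₂ ∧ x₁ ≠ x₂)
    (p : A → ℝ) (hp : ∀ a, 0 < p a) (hp1 : ∑ a, p a = 1)
    (μ : Measure ℝ) [IsProbabilityMeasure μ]
    (hstat : μ = ∑ a, ENNReal.ofReal (p a) • Measure.map (φ a) μ)
    (hB : μ.real {x | |x| ≤ R} = 1) :
    ∃ α C : ℝ, 0 < α ∧ α ≤ 1 / 2 ∧ 0 < C ∧ ∀ ε : ℝ, 0 < ε → ∀ S : Set ℝ, MeasurableSet S →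
      S ⊆ {x | |x| ≤ R} → (∀ x ∈ S, ∀ y ∈ S, |x - y| ≤ ε) → μ.real S ≤ C * ε ^ α := by
  obtain ⟨a₁, a₂, x₁, x₂, h₁, h₂, hne⟩ := hfix
  set d := |x₁ - x₂| with hd
  have hd0 : 0 < d := abs_pos.2 (sub_ne_zero.2 hne)
  set M := R + |x₁| + |x₂| with hM
  have hM0 : 0 < M := by have := hG.hR; positivity
  obtain ⟨n', hn'⟩ := exists_pow_lt_of_lt_one (show 0 < d / 4 / M by positivity) hG.hr1
  set n := n' + 1 with hn0
  have hl0 := hG.hl0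
  have hr0 := hG.hr0
  have hrn : r ^ n * M < d / 4 := by
    have : r ^ n ≤ r ^ n' := pow_le_pow_of_le_one hr0.le hG.hr1.le (by omega)
    rw [lt_div_iff₀ hM0] at hn'
    nlinarith
  have hpn : ∀ a, 0 < p a ^ n ∧ p a ^ n ≤ 1 := by
    intro a
    have : p a ≤ 1 := by
      rw [← hp1]
      exact Finset.single_le_sum (fun b _ => (hp b).le) (Finset.mem_univ a)
    exact ⟨pow_pos (hp a) n, pow_le_one₀ (hp a).le this⟩
  set κ := max (max (1 - p a₁ ^ n) (1 - p a₂ ^ n)) (1 / 2) with hκ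
  have hκ0 : 0 < κ := lt_of_lt_of_le (by norm_num) (le_max_right _ _)
  have hκ1 : κ < 1 := by
    refine max_lt (max_lt ?_ ?_) (by norm_num)
    · linarith [hpn a₁]
    · linarith [hpn a₂]
  -- τ smaller than l ^ n so that α ≤ 1/2
  set τ := min (l ^ n) (κ ^ 2) with hτ
  have hτ0 : 0 < τ := lt_min (by positivity) (by positivity)
  have hτκ : τ ≤ κ ^ 2 := min_le_right _ _
  have hτ1 : τ < 1 := lt_of_le_of_lt hτκ (by nlinarith)
  set s₀ := d / 4 with hs₀
  have hs0 : 0 < s₀ := by positivity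
  have key : ∀ k : ℕ, ∀ S : Set ℝ, MeasurableSet S → S ⊆ {x | |x| ≤ R} →
      (∀ x ∈ S, ∀ y ∈ S, |x - y| ≤ τ ^ k * s₀) → μ.real S ≤ κ ^ k := by
    intro k
    induction k with
    | zero => intro S _ _ _; simp
    | succ k ih =>
      intro S hS hSB hSd
      have hk0 : 0 ≤ τ ^ k * s₀ := by positivity
      have hSd' : ∀ x ∈ S, ∀ y ∈ S, |x - y| ≤ l ^ n * (τ ^ k * s₀) := by
        intro x hx y hy
        refine (hSd x hx y hy).trans ?_
        rw [pow_succ', mul_assoc]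
        exact mul_le_mul_of_nonneg_right (min_le_left _ _) hk0
      have hSd'' : ∀ x ∈ S, ∀ y ∈ S, |x - y| ≤ s₀ := by
        intro x hx y hy
        refine (hSd x hx y hy).trans ?_
        have : τ ^ (k + 1) ≤ 1 := pow_le_one₀ hτ0.le hτ1.le
        nlinarith
      have fin : ∀ a, (∀ x, |x| ≤ R → (φ a)^[n] x ∉ S) → 1 - p a ^ n ≤ κ → μ.real S ≤ κ ^ (k + 1) := by
        intro a ha hle
        refine (miss_bound φ hG p hp hp1 μ hstat hB a _ _ hk0 ih n S hS hSB hSd' ha).trans ?_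
        rw [pow_succ' κ k]
        exact mul_le_mul_of_nonneg_right hle (pow_nonneg hκ0.le k)
      by_cases hc1 : ∀ x, |x| ≤ R → (φ a₁)^[n] x ∉ S
      · exact fin a₁ hc1 ((le_max_left _ _).trans (le_max_left _ _))
      by_cases hc2 : ∀ x, |x| ≤ R → (φ a₂)^[n] x ∉ S
      · exact fin a₂ hc2 ((le_max_right _ _).trans (le_max_left _ _))
      exfalso
      push Not at hc1 hc2
      obtain ⟨x, hx, hxS⟩ := hc1
      obtain ⟨y, hy, hyS⟩ := hc2
      have e1 := iterate_close φ hG a₁ x₁ h₁ x n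
      have e2 := iterate_close φ hG a₂ x₂ h₂ y n
      have e3 := hSd'' _ hxS _ hyS
      have f1 : |x - x₁| ≤ M := by
        have := abs_sub x x₁; have := abs_nonneg x₂; linarith
      have f2 : |y - x₂| ≤ M := by
        have := abs_sub y x₂; have := abs_nonneg x₁; linarith
      have g1 : r ^ n * |x - x₁| ≤ r ^ n * M := by gcongr
      have g2 : r ^ n * |y - x₂| ≤ r ^ n * M := by gcongr
      have t1 := abs_sub_le x₁ ((φ a₁)^[n] x) x₂
      have t2 := abs_sub_le ((φ a₁)^[n] x) ((φ a₂)^[n] y) x₂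
      rw [abs_sub_comm x₁ ((φ a₁)^[n] x)] at t1
      linarith
  set α := Real.log κ / Real.log τ with hα
  have hlκ : Real.log κ < 0 := Real.log_neg hκ0 hκ1
  have hlτ : Real.log τ < 0 := Real.log_neg hτ0 hτ1
  have hα0 : 0 < α := div_pos_of_neg_of_neg hlκ hlτ
  have hα2 : α ≤ 1 / 2 := by
    rw [hα, div_le_iff_of_neg hlτ]
    have := Real.log_le_log hτ0 hτκ
    rw [Real.log_pow] at this
    push_cast at this
    linarith
  have hτα : τ ^ α = κ := by
    rw [Real.rpow_def_of_pos hτ0, hα, mul_div_cancel₀ _ hlτ.ne, Real.exp_log hκ0]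
  refine ⟨α, (1 / (τ * s₀)) ^ α, hα0, hα2, by positivity, ?_⟩
  intro ε hε S hS hSB hSd
  rw [← Real.mul_rpow (by positivity) hε.le]
  by_cases hεs : ε ≤ s₀
  · obtain ⟨k, hk1, hk2⟩ := exists_nat_pow_near_of_lt_one (x := ε / s₀) (by positivity)
      ((div_le_one hs0).2 hεs) hτ0 hτ1
    rw [div_le_iff₀ hs0] at hk2
    rw [lt_div_iff₀ hs0] at hk1
    refine (key k S hS hSB fun x hx y hy => (hSd x hx y hy).trans hk2).trans ?_
    rw [← hτα, ← Real.rpow_mul_natCast hτ0.le, mul_comm, Real.rpow_natCast_mul hτ0.le]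
    refine Real.rpow_le_rpow (by positivity) ?_ hα0.le
    rw [one_div, inv_mul_eq_div, le_div_iff₀ (by positivity)]
    rw [pow_succ] at hk1
    nlinarith
  · refine measureReal_le_one.trans (Real.one_le_rpow ?_ hα0.le)
    push Not at hεs
    rw [one_div, inv_mul_eq_div, le_div_iff₀ (by positivity)]
    nlinarith

lemma listMap_maps {A : Type*} (φ : A → ℝ → ℝ) {R r l K β : ℝ}
    (hG : GoodIFS φ R r l K β) (w : List A) (x : ℝ) (hx : |x| ≤ R) : |listMap φ w x| ≤ R := by
  induction w with
  | nil => exact hx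
  | cons a w ih => exact hG.maps a _ ih

lemma listMap_cont {A : Type*} (φ : A → ℝ → ℝ) {R r l K β : ℝ}
    (hG : GoodIFS φ R r l K β) (w : List A) : Continuous (listMap φ w) := by
  induction w with
  | nil => exact continuous_id
  | cons a w ih => exact (hG.cont a).comp ih

lemma listMap_contr {A : Type*} (φ : A → ℝ → ℝ) {R r l K β : ℝ}
    (hG : GoodIFS φ R r l K β) (w : List A) (x y : ℝ) :
    |listMap φ w x - listMap φ w y| ≤ r ^ w.length * |x - y| := by
  induction w with
  | nil => simp [listMap]
  | cons a w ih =>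
    refine (hG.contr a _ _).trans ?_
    rw [List.length_cons, pow_succ', mul_assoc]
    exact mul_le_mul_of_nonneg_left ih hG.hr0.le

lemma listMap_snoc {A : Type*} (φ : A → ℝ → ℝ) (w : List A) (a : A) :
    listMap φ (w ++ [a]) = listMap φ w ∘ φ a := by
  induction w with
  | nil => rfl
  | cons b w ih => simp only [List.cons_append, listMap, ih, Function.comp_assoc]

lemma distortion {A : Type*} (φ : A → ℝ → ℝ) {R r l K β : ℝ}
    (hG : GoodIFS φ R r l K β) : ∃ D : ℝ, 1 ≤ D ∧ ∀ (w : List A) (x y u v : ℝ),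
      |x| ≤ R → |y| ≤ R → |u| ≤ R → |v| ≤ R →
      |listMap φ w x - listMap φ w y| * |u - v| ≤
        D * (|listMap φ w u - listMap φ w v| * |x - y|) := by
  have hr0 := hG.hr0
  have hR := hG.hR
  have hK := hG.hK
  set ρ := r ^ β with hρ
  have hρ0 : 0 < ρ := by positivity
  have hρ1 : ρ < 1 := Real.rpow_lt_one hr0.le hG.hr1 hG.hβ
  set K' := K * (2 * R) ^ β with hK'
  have hK'0 : 0 ≤ K' := by positivity
  have main : ∀ (w : List A) (x y u v : ℝ), |x| ≤ R → |y| ≤ R → |u| ≤ R → |v| ≤ R →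
      |listMap φ w x - listMap φ w y| * |u - v| ≤
        Real.exp (K' * ∑ j ∈ Finset.range w.length, ρ ^ j) *
          (|listMap φ w u - listMap φ w v| * |x - y|) := by
    intro w x y u v hx hy hu hv
    induction w with
    | nil => simp [listMap, mul_comm]
    | cons a w ih =>
      set g := listMap φ w with hg
      have hcl : ∀ x y, |x| ≤ R → |y| ≤ R → |g x - g y| ≤ r ^ w.length * (2 * R) := by
        intro x y hx hy
        refine (listMap_contr φ hG w x y).trans ?_
        have := abs_sub x y
        gcongr
        linarith
      have h1 := hG.dist1 a _ (g x) (g y) (g u) (g v) (listMap_maps φ hG w x hx)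
        (listMap_maps φ hG w y hy) (listMap_maps φ hG w u hu) (listMap_maps φ hG w v hv)
        (hcl x u hx hu) (hcl x v hx hv) (hcl y u hy hu) (hcl y v hy hv)
      have e1 : K * (r ^ w.length * (2 * R)) ^ β = K' * ρ ^ w.length := by
        rw [Real.mul_rpow (by positivity) (by positivity), hK', hρ,
          ← Real.rpow_natCast_mul hr0.le, ← Real.rpow_mul_natCast hr0.le, mul_comm β]
        ring
      rw [e1] at h1
      have e2 : 1 + K' * ρ ^ w.length ≤ Real.exp (K' * ρ ^ w.length) := by
        rw [add_comm]; exact Real.add_one_le_exp _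
      change |φ a (g x) - φ a (g y)| * |u - v| ≤ _ * (|φ a (g u) - φ a (g v)| * |x - y|)
      rw [List.length_cons, Finset.sum_range_succ, mul_add, Real.exp_add]
      set Dw := Real.exp (K' * ∑ j ∈ Finset.range w.length, ρ ^ j)
      have hDw : 0 < Dw := Real.exp_pos _
      by_cases huv : g u = g v
      · -- degenerate case : injectivity of g on the ball
        by_cases hxy : x = y
        · subst hxy; simp
        · have h5 := ih
          rw [huv, sub_self, abs_zero, zero_mul, mul_zero] at h5
          have h6 : |g x - g y| * |u - v| = 0 := le_antisymm h5 (by positivity)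
          rcases mul_eq_zero.1 h6 with h | h
          · have : g x = g y := sub_eq_zero.1 (abs_eq_zero.1 h)
            rw [this]; simp; positivity
          · rw [h]; simp; positivity
      · have hpos : 0 < |g u - g v| := abs_pos.2 (sub_ne_zero.2 huv)
        refine le_of_mul_le_mul_right ?_ hpos
        calc |φ a (g x) - φ a (g y)| * |u - v| * |g u - g v|
            = |φ a (g x) - φ a (g y)| * |g u - g v| * |u - v| := by ring
          _ ≤ (1 + K' * ρ ^ w.length) * (|φ a (g u) - φ a (g v)| * |g x - g y|) * |u - v| := by
              gcongr
          _ ≤ Real.exp (K' * ρ ^ w.length) * (|φ a (g u) - φ a (g v)| * |g x - g y|) * |u - v| := by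
              gcongr
          _ = Real.exp (K' * ρ ^ w.length) * |φ a (g u) - φ a (g v)| * (|g x - g y| * |u - v|) := by
              ring
          _ ≤ Real.exp (K' * ρ ^ w.length) * |φ a (g u) - φ a (g v)| *
                (Dw * (|g u - g v| * |x - y|)) := by gcongr
          _ = _ := by ring
  refine ⟨Real.exp (K' * (1 - ρ)⁻¹), Real.one_le_exp ?_, ?_⟩
  · have : 0 < 1 - ρ := by linarith
    positivity
  · intro w x y u v hx hy hu hv
    refine (main w x y u v hx hy hu hv).trans ?_
    have : ∑ j ∈ Finset.range w.length, ρ ^ j ≤ (1 - ρ)⁻¹ := by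
      rw [← tsum_geometric_of_lt_one hρ0.le hρ1]
      exact (summable_geometric_of_lt_one hρ0.le hρ1).sum_le_tsum _ (fun _ _ => by positivity)
    gcongr

lemma sep_bound {A : Type*} [Fintype A] (φ : A → ℝ → ℝ) {R r l K β : ℝ}
    (hG : GoodIFS φ R r l K β) (hfix : ∃ a₁ a₂ x₁ x₂, φ a₁ x₁ = x₁ ∧ φ a₂ x₂ = x₂ ∧ x₁ ≠ x₂)
    (p : A → ℝ) (hp : ∀ a, 0 < p a) (hp1 : ∑ a, p a = 1)
    (μ : Measure ℝ) [IsProbabilityMeasure μ]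
    (hstat : μ = ∑ a, ENNReal.ofReal (p a) • Measure.map (φ a) μ)
    (hB : μ.real {x | |x| ≤ R} = 1) :
    ∃ α C : ℝ, 0 < α ∧ α ≤ 1 / 2 ∧ 0 < C ∧ ∀ δ ε : ℝ, 0 < δ → δ ≤ 1 → 0 < ε →
      ∀ S : Set ℝ, S.Countable → (∀ s ∈ S, ∀ t ∈ S, s ≠ t → δ ≤ |s - t|) →
      μ.real (⋃ s ∈ S, {x | |x - s| ≤ ε * δ}) ≤ C * ε ^ α := by
  obtain ⟨α, C₀, hα0, hα2, hC₀, hfr⟩ := frostman φ hG hfix p hp hp1 μ hstat hB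
  obtain ⟨D, hD, hdist⟩ := distortion φ hG
  have hR := hG.hR
  have hl0 := hG.hl0
  have hl1 := hG.hl1
  have hD0 : 0 < D := by linarith
  have hRR : |R| ≤ R := by rw [abs_of_nonneg (by linarith)]
  have hRn : |-R| ≤ R := by rw [abs_neg]; exact hRR
  have hR2 : |R - -R| = 2 * R := by rw [abs_of_nonneg] <;> linarith
  have hm : MeasurableSet {x : ℝ | |x| ≤ R} := measurableSet_le measurable_norm measurable_const
  set C₁ := 16 * D ^ 3 * R / l with hC₁
  have hC₁0 : 0 < C₁ := by positivity
  refine ⟨α, C₀ * C₁ ^ α + 8 ^ α, hα0, hα2, by positivity, ?_⟩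
  intro δ ε hδ hδ1 hε S hSc hsep
  set U := ⋃ s ∈ S, {x : ℝ | |x - s| ≤ ε * δ} with hU
  have hUm : MeasurableSet U := by
    refine MeasurableSet.biUnion hSc fun s _ => ?_
    exact measurableSet_le ((measurable_id.sub_const s).norm) measurable_const
  by_cases hε8 : ε ≤ 1 / 8
  swap
  · push Not at hε8
    have h1 : (1 : ℝ) ≤ (8 * ε) ^ α := Real.one_le_rpow (by linarith) hα0.le
    rw [Real.mul_rpow (by norm_num) hε.le] at h1
    have h2 : 0 ≤ C₀ * C₁ ^ α * ε ^ α := by positivity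
    have h3 : μ.real U ≤ 1 := measureReal_le_one
    nlinarith
  obtain ⟨N, hN⟩ := exists_pow_lt_of_lt_one (show 0 < δ / (4 * D) / (2 * R) by positivity) hG.hr1
  rw [lt_div_iff₀ (by positivity)] at hN
  have main : ∀ (k : ℕ) (w : List A), N ≤ w.length + k →
      l / D * (δ / (4 * D)) ≤ |listMap φ w R - listMap φ w (-R)| →
      μ.real (listMap φ w ⁻¹' U) ≤ C₀ * (C₁ * ε) ^ α := by
    intro k
    have direct : ∀ w : List A,
      l / D * (δ / (4 * D)) ≤ |listMap φ w R - listMap φ w (-R)| →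
      |listMap φ w R - listMap φ w (-R)| ≤ δ / (4 * D) →
      μ.real (listMap φ w ⁻¹' U) ≤ C₀ * (C₁ * ε) ^ α := by
      intro w hlow hup
      rw [real_inter_ball μ R hB]
      refine hfr _ (by positivity) _ (((listMap_cont φ hG w).measurable hUm).inter hm)
        Set.inter_subset_right ?_
      rintro x ⟨hx, hxB⟩ y ⟨hy, hyB⟩
      have hxB : |x| ≤ R := hxB
      have hyB : |y| ≤ R := hyB
      simp only [hU, Set.mem_preimage, Set.mem_iUnion] at hx hy
      obtain ⟨s, hs, hxs⟩ := hx
      obtain ⟨t, ht, hyt⟩ := hy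
      have hxs : |listMap φ w x - s| ≤ ε * δ := hxs
      have hyt : |listMap φ w y - t| ≤ ε * δ := hyt
      set g := listMap φ w
      have hg1 : |g x - g y| ≤ δ / 4 := by
        have h1 := hdist w x y R (-R) hxB hyB hRR hRn
        rw [hR2] at h1
        have h2 : |x - y| ≤ 2 * R := by have := abs_sub x y; linarith
        have h3 : D * (|g R - g (-R)| * |x - y|) ≤ D * (δ / (4 * D) * (2 * R)) := by gcongr
        have h4 : D * (δ / (4 * D) * (2 * R)) = δ / 4 * (2 * R) := by field_simp
        refine le_of_mul_le_mul_right ?_ (show 0 < 2 * R by positivity)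
        rw [← h4]; exact h1.trans h3
      have hεδ : ε * δ ≤ δ / 8 := by nlinarith
      have hst : s = t := by
        by_contra hne
        have h1 := hsep s hs t ht hne
        have h2 := abs_sub_le s (g x) t
        have h3 := abs_sub_le (g x) (g y) t
        rw [abs_sub_comm s (g x)] at h2
        linarith
      subst hst
      have hg2 : |g x - g y| ≤ 2 * (ε * δ) := by
        have h3 := abs_sub_le (g x) s (g y)
        rw [abs_sub_comm s (g y)] at h3
        linarith
      have h1 := hdist w R (-R) x y hRR hRn hxB hyB
      rw [hR2] at h1
      have h2 : l / D * (δ / (4 * D)) * |x - y| ≤ D * (2 * (ε * δ) * (2 * R)) := by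
        calc _ ≤ |g R - g (-R)| * |x - y| := by gcongr
          _ ≤ _ := h1
          _ ≤ _ := by gcongr
      have h3 : D * (2 * (ε * δ) * (2 * R)) = l / D * (δ / (4 * D)) * (C₁ * ε) := by
        rw [hC₁]; field_simp; ring
      rw [h3] at h2
      exact le_of_mul_le_mul_left h2 (by positivity)
    induction k with
    | zero =>
      intro w hw hlow
      refine direct w hlow ?_
      refine (listMap_contr φ hG w _ _).trans ?_
      rw [hR2]
      have : r ^ w.length ≤ r ^ N := pow_le_pow_of_le_one hG.hr0.le hG.hr1.le (by omega)
      nlinarith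
    | succ k ih =>
      intro w hw hlow
      by_cases hup : |listMap φ w R - listMap φ w (-R)| ≤ δ / (4 * D)
      · exact direct w hlow hup
      push Not at hup
      rw [stat_real φ hG.cont p hp μ hstat _ ((listMap_cont φ hG w).measurable hUm)]
      calc _ ≤ ∑ a, p a * (C₀ * (C₁ * ε) ^ α) := by
            refine Finset.sum_le_sum fun a _ => mul_le_mul_of_nonneg_left ?_ (hp a).le
            have h1 := ih (w ++ [a]) (by simp; omega)
            rw [listMap_snoc] at h1
            refine h1 ?_
            have h2 := hdist w R (-R) (φ a R) (φ a (-R)) hRR hRn (hG.maps a _ hRR)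
              (hG.maps a _ hRn)
            have h3 := hG.low a R (-R) hRR hRn
            rw [hR2] at h2 h3
            simp only [Function.comp_apply]
            have h4 : δ / (4 * D) * (l * (2 * R)) ≤
                D * (|listMap φ w (φ a R) - listMap φ w (φ a (-R))| * (2 * R)) := by
              refine le_trans ?_ h2
              gcongr
            refine le_of_mul_le_mul_left ?_ (show 0 < D * (2 * R) by positivity)
            calc D * (2 * R) * (l / D * (δ / (4 * D))) = δ / (4 * D) * (l * (2 * R)) := by
                  field_simp
              _ ≤ _ := h4
              _ = _ := by ring
        _ = _ := by rw [← Finset.sum_mul, hp1, one_mul]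
  have h0 := main N [] (by simp) ?_
  · change μ.real U ≤ _ at h0
    rw [Real.mul_rpow hC₁0.le hε.le] at h0
    have : (0 : ℝ) ≤ 8 ^ α * ε ^ α := by positivity
    linarith
  · change _ ≤ |R - -R|
    rw [hR2]
    have h1 : l / D ≤ 1 := by rw [div_le_one hD0]; linarith
    have h2 : δ / (4 * D) ≤ 1 := by rw [div_le_one (by positivity)]; linarith
    have h3 : 0 < δ / (4 * D) := by positivity
    nlinarith

def ratLevel (k : ℕ) : Set ℝ :=
  {s | ∃ (m : ℤ) (q : ℕ), 2 ^ k ≤ q ∧ q < 2 ^ (k + 1) ∧ s = (m : ℝ) / (q : ℝ)}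

lemma ratLevel_countable (k : ℕ) : (ratLevel k).Countable := by
  refine (Set.countable_range (fun z : ℤ × ℕ => (z.1 : ℝ) / (z.2 : ℝ))).mono ?_
  rintro s ⟨m, q, -, -, rfl⟩
  exact ⟨(m, q), rfl⟩

lemma ratLevel_sep (k : ℕ) : ∀ s ∈ ratLevel k, ∀ t ∈ ratLevel k, s ≠ t →
    (1 / 4 : ℝ) ^ (k + 1) ≤ |s - t| := by
  rintro s ⟨m, q, h1, h2, rfl⟩ t ⟨m', q', h1', h2', rfl⟩ hne
  have hq : 0 < q := lt_of_lt_of_le (by positivity) h1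
  have hq' : 0 < q' := lt_of_lt_of_le (by positivity) h1'
  have hqr : (0 : ℝ) < q := by exact_mod_cast hq
  have hqr' : (0 : ℝ) < q' := by exact_mod_cast hq'
  have e : (m : ℝ) / q - (m' : ℝ) / q' = ((m * q' - m' * q : ℤ) : ℝ) / (q * q') := by
    push_cast; field_simp
  have hz : (m * q' - m' * q : ℤ) ≠ 0 := by
    intro h0
    rw [h0] at e
    simp only [Int.cast_zero, zero_div] at e
    exact hne (sub_eq_zero.1 e)
  have hz1 : (1 : ℝ) ≤ |((m * q' - m' * q : ℤ) : ℝ)| := by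
    exact_mod_cast Int.one_le_abs hz
  rw [e, abs_div, abs_of_pos (mul_pos hqr hqr'), le_div_iff₀ (mul_pos hqr hqr')]
  refine le_trans ?_ hz1
  have a1 : (q : ℝ) ≤ 2 ^ (k + 1) := by exact_mod_cast h2.le
  have a2 : (q' : ℝ) ≤ 2 ^ (k + 1) := by exact_mod_cast h2'.le
  calc (1 / 4 : ℝ) ^ (k + 1) * (q * q') ≤ (1 / 4 : ℝ) ^ (k + 1) * (2 ^ (k + 1) * 2 ^ (k + 1)) := by
        gcongr
    _ = 1 := by rw [← mul_pow, ← mul_pow]; norm_num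

lemma freq_of_infinite (Ψ : ℕ → ℝ) (hΨ : Antitone Ψ) (x : ℝ)
    (hx : {pq : ℤ × ℕ | 0 < pq.2 ∧ |x - (pq.1 : ℝ) / (pq.2 : ℝ)| ≤ Ψ pq.2}.Infinite) :
    ∃ᶠ k in atTop, ∃ s ∈ ratLevel k, |x - s| ≤ Ψ (2 ^ k) := by
  by_contra hcon
  rw [not_frequently, eventually_atTop] at hcon
  obtain ⟨k₀, hk₀⟩ := hcon
  refine hx ?_
  set M := (2 : ℝ) ^ k₀ * (|x| + Ψ 0) with hM
  refine Set.Finite.subset ((Set.finite_Icc (-⌈M⌉) ⌈M⌉).prod (Set.finite_Iio (2 ^ k₀))) ?_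
  rintro ⟨m, q⟩ ⟨hq, hxq⟩
  simp only at hq hxq
  have hqr : (0 : ℝ) < q := by exact_mod_cast hq
  have hlt : q < 2 ^ k₀ := by
    by_contra hge
    push Not at hge
    have hk : k₀ ≤ Nat.log 2 q := (Nat.le_log_iff_pow_le (by norm_num) hq.ne').2 hge
    have hl : 2 ^ Nat.log 2 q ≤ q := Nat.pow_log_le_self 2 hq.ne'
    exact hk₀ _ hk ⟨_, ⟨m, q, hl, Nat.lt_pow_succ_log_self (by norm_num) q, rfl⟩,
      hxq.trans (hΨ hl)⟩
  have hmM : |(m : ℝ)| ≤ M := by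
    have h1 : |(m : ℝ) / q| ≤ |x| + Ψ 0 := by
      have h2 := abs_sub_abs_le_abs_sub ((m : ℝ) / q) x
      rw [abs_sub_comm] at h2
      have := hΨ (Nat.zero_le q)
      linarith
    rw [abs_div, abs_of_pos hqr, div_le_iff₀ hqr] at h1
    have h3 : (q : ℝ) ≤ 2 ^ k₀ := by exact_mod_cast hlt.le
    have h4 : 0 ≤ |x| + Ψ 0 := by
      by_contra hneg
      push Not at hneg
      have := abs_nonneg (m : ℝ)
      nlinarith
    rw [hM]
    nlinarith
  refine ⟨?_, hlt⟩
  have h5 := abs_le.1 (hmM.trans (Int.le_ceil M))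
  exact ⟨by exact_mod_cast h5.1, by exact_mod_cast h5.2⟩

/-- Diophantine statement for self-conformal measures on ℝ. -/
theorem self_conformal_WPsi_null
    {A : Type*} [Fintype A]
    (φ : A → ℝ → ℝ) (hΦ : IsSelfConformalIFS φ)
    (p : A → ℝ) (hp : ∀ a, 0 < p a) (hp1 : ∑ a, p a = 1)
    (μ : Measure ℝ) [IsProbabilityMeasure μ]
    (hstat : μ = ∑ a, ENNReal.ofReal (p a) • Measure.map (φ a) μ)
    (hna : ∀ x, μ {x} = 0) :
    ∃ α : ℝ, 0 < α ∧
      ∀ Ψ : ℕ → ℝ, (∀ n, 0 < Ψ n) → Antitone Ψ →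
        (Summable fun n : ℕ => (n : ℝ) ^ (2 * α - 1) * Ψ n ^ α) →
        μ {x : ℝ | {pq : ℤ × ℕ | 0 < pq.2 ∧
            |x - (pq.1 : ℝ) / (pq.2 : ℝ)| ≤ Ψ pq.2}.Infinite} = 0 := by
  have hfix := hΦ.2.2.2.2.2
  obtain ⟨R, r, l, K, β, hG, hB⟩ := good_of φ hΦ p hp hp1 μ hstat
  obtain ⟨α, C, hα0, hα2, hC, hsep⟩ := sep_bound φ hG hfix p hp hp1 μ hstat hB
  refine ⟨α, hα0, ?_⟩
  intro Ψ hΨ0 hΨ hsum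
  have hcond : Summable fun k : ℕ => ((4 : ℝ) ^ k * Ψ (2 ^ k)) ^ α := by
    rw [← summable_condensed_iff_of_nonneg] at hsum
    · refine hsum.congr fun k => ?_
      have h2 : (0 : ℝ) < 2 ^ k := by positivity
      rw [Real.mul_rpow (by positivity) (hΨ0 _).le, ← mul_assoc]
      congr 1
      push_cast
      rw [show (4 : ℝ) ^ k = ((2 : ℝ) ^ k) ^ (2 : ℝ) by
        rw [Real.rpow_two, ← pow_mul, mul_comm, pow_mul]; norm_num, ← Real.rpow_mul h2.le,
        Real.rpow_sub_one h2.ne']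
      field_simp
    · intro n
      have := hΨ0 n
      positivity
    · intro m n hm hmn
      have hm' : (0 : ℝ) < m := by exact_mod_cast hm
      have hmn' : (m : ℝ) ≤ n := by exact_mod_cast hmn
      have h1 := Real.rpow_le_rpow_of_nonpos hm' hmn' (show 2 * α - 1 ≤ 0 by linarith)
      have h2 := Real.rpow_le_rpow (hΨ0 n).le (hΨ hmn) hα0.le
      exact mul_le_mul h1 h2 (Real.rpow_nonneg (hΨ0 n).le _) (by positivity)
  have hset : ∀ k : ℕ, {x : ℝ | ∃ s ∈ ratLevel k, |x - s| ≤ Ψ (2 ^ k)} =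
      ⋃ s ∈ ratLevel k, {x | |x - s| ≤ (4 ^ (k + 1) * Ψ (2 ^ k)) * (1 / 4 : ℝ) ^ (k + 1)} := by
    intro k
    have e : (4 ^ (k + 1) * Ψ (2 ^ k)) * (1 / 4 : ℝ) ^ (k + 1) = Ψ (2 ^ k) := by
      rw [mul_right_comm, ← mul_pow]; norm_num
    rw [e]
    ext x
    simp
  have hbound : ∀ k : ℕ, μ.real {x : ℝ | ∃ s ∈ ratLevel k, |x - s| ≤ Ψ (2 ^ k)} ≤
      C * 4 ^ α * ((4 : ℝ) ^ k * Ψ (2 ^ k)) ^ α := by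
    intro k
    have hpos := hΨ0 (2 ^ k)
    have h1 := hsep ((1 / 4 : ℝ) ^ (k + 1)) (4 ^ (k + 1) * Ψ (2 ^ k)) (by positivity)
      (pow_le_one₀ (by norm_num) (by norm_num)) (by positivity) (ratLevel k)
      (ratLevel_countable k) (ratLevel_sep k)
    rw [hset k]
    refine h1.trans (le_of_eq ?_)
    rw [pow_succ', mul_assoc 4, Real.mul_rpow (by norm_num) (by positivity), mul_assoc]
  have hfreq : μ {x | ∃ᶠ k in atTop, ∃ s ∈ ratLevel k, |x - s| ≤ Ψ (2 ^ k)} = 0 := by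
    refine measure_setOf_frequently_eq_zero ?_
    have hs2 := (hcond.mul_left (C * 4 ^ α))
    have hle : ∀ k : ℕ, μ {x : ℝ | ∃ s ∈ ratLevel k, |x - s| ≤ Ψ (2 ^ k)} ≤
        ENNReal.ofReal (C * 4 ^ α * ((4 : ℝ) ^ k * Ψ (2 ^ k)) ^ α) := by
      intro k
      rw [← ofReal_measureReal]
      exact ENNReal.ofReal_le_ofReal (hbound k)
    exact ne_top_of_le_ne_top hs2.tsum_ofReal_ne_top (ENNReal.tsum_le_tsum hle)
  exact measure_mono_null (fun x hx => freq_of_infinite Ψ hΨ x hx) hfreq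
end
end

section
/- Let μ be an affinely irreducible self-similar measure on ℝ^d. Then there exists α > 0 such that μ(W(Ψ)) = 0 for every decreasing function Ψ : ℕ → (0,∞) satisfying ∑_{n=1}^∞ n^{α(d+1)/d − 1} Ψ(n)^α < ∞. -/
noncomputable section
open MeasureTheory Metric Filter Topology

variable {E : Type*} [NormedAddCommGroup E] [NormedSpace ℝ E]

set_option linter.unusedSectionVars false

/-- A similarity with arbitrary positive ratio. -/
def SimMap {V : Type*} [NormedAddCommGroup V] (s : ℝ) (ψ : V → V) : Prop :=
  0 < s ∧ ∀ x y, ‖ψ x - ψ y‖ = s * ‖x - y‖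

section simmaps
variable {V : Type*} [NormedAddCommGroup V] [InnerProductSpace ℝ V]

theorem SimMap.comp {s t : ℝ} {ψ χ : V → V} (h : SimMap s ψ) (h' : SimMap t χ) :
    SimMap (s * t) (ψ ∘ χ) :=
  ⟨mul_pos h.1 h'.1, fun x y => by simp [h.2, h'.2, mul_assoc]⟩

theorem SimMap.continuous {s : ℝ} {ψ : V → V} (h : SimMap s ψ) : Continuous ψ := by
  have : LipschitzWith ⟨s, h.1.le⟩ ψ := LipschitzWith.of_dist_le_mul fun x y => by
    rw [dist_eq_norm, dist_eq_norm, h.2]; rfl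
  exact this.continuous

theorem SimMap.exists_isom {s : ℝ} {ψ : V → V} (h : SimMap s ψ) :
    ∃ f : V →ᵃⁱ[ℝ] V, ∀ x, ψ x = s • f x := by
  have hs := h.1
  have : Isometry (fun x => s⁻¹ • ψ x) := Isometry.of_dist_eq fun x y => by
    rw [dist_eq_norm, ← smul_sub, norm_smul, h.2, dist_eq_norm, norm_inv, Real.norm_of_nonneg hs.le]
    field_simp
  refine ⟨this.affineIsometryOfStrictConvexSpace, fun x => ?_⟩
  simp [hs.ne']

theorem SimMap.exists_affine {s : ℝ} {ψ : V → V} (h : SimMap s ψ) :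
    ∃ f : V →ᵃ[ℝ] V, ∀ x, f x = ψ x := by
  obtain ⟨f, hf⟩ := h.exists_isom
  exact ⟨s • f.toAffineMap, fun x => by simp [hf]⟩

theorem SimMap.pullback [FiniteDimensional ℝ V] {s : ℝ} {ψ : V → V} (h : SimMap s ψ)
    (l : V →L[ℝ] ℝ) (hl : ‖l‖ = 1) (t : ℝ) :
    ∃ (l' : V →L[ℝ] ℝ) (t' : ℝ), ‖l'‖ = 1 ∧ ∀ x, l (ψ x) - t = s * (l' x - t') := by
  obtain ⟨f, hf⟩ := h.exists_isom
  have hs := h.1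
  let O : V ≃ₗᵢ[ℝ] V := f.linearIsometry.toLinearIsometryEquiv rfl
  refine ⟨l.comp (O : V →L[ℝ] V), t / s - l (f 0), ?_, fun x => ?_⟩
  · rw [← hl]; exact ContinuousLinearMap.opNorm_comp_linearIsometryEquiv l O
  · have h1 : f x = O x + f 0 := by
      have := f.map_vadd 0 x
      simpa [O] using this
    rw [hf, h1]
    simp
    field_simp
    ring
end simmaps

section ifs
variable {V : Type*} [NormedAddCommGroup V] [InnerProductSpace ℝ V] [FiniteDimensional ℝ V]
  [MeasurableSpace V] [BorelSpace V] {A : Type*} [Fintype A]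

/-- Data of a self-similar measure with uniform bounds on the ratios. -/
structure IFSData (φ : A → V → V) (p : A → ℝ) (r : A → ℝ) (rmin rmax : ℝ) (μ : Measure V) :
    Prop where
  sim : ∀ a, SimMap (r a) (φ a)
  pos : 0 < rmin
  lt_one : rmax < 1
  lo : ∀ a, rmin ≤ r a
  hi : ∀ a, r a ≤ rmax
  ppos : ∀ a, 0 < p a
  psum : ∑ a, p a = 1
  stat : μ = ∑ a, ENNReal.ofReal (p a) • Measure.map (φ a) μ

variable {φ : A → V → V} {p : A → ℝ} {r : A → ℝ} {rmin rmax : ℝ} {μ : Measure V}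

theorem IFSData.psumE (D : IFSData φ p r rmin rmax μ) : ∑ a, ENNReal.ofReal (p a) = 1 := by
  rw [← ENNReal.ofReal_sum_of_nonneg fun a _ => (D.ppos a).le, D.psum, ENNReal.ofReal_one]

theorem IFSData.lintegral (D : IFSData φ p r rmin rmax μ) (g : V → ENNReal) (hg : Measurable g) :
    ∫⁻ x, g x ∂μ = ∑ a, ENNReal.ofReal (p a) * ∫⁻ x, g (φ a x) ∂μ := by
  conv_lhs => rw [D.stat]
  rw [lintegral_finsetSum_measure]
  refine Finset.sum_congr rfl fun a _ => ?_
  rw [lintegral_smul_measure, lintegral_map hg (D.sim a).continuous.measurable, smul_eq_mul]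

theorem IFSData.meas (D : IFSData φ p r rmin rmax μ) (S : Set V) (hS : MeasurableSet S) :
    μ S = ∑ a, ENNReal.ofReal (p a) * μ (φ a ⁻¹' S) := by
  conv_lhs => rw [D.stat]
  simp only [Measure.coe_finsetSum, Measure.coe_smul, Finset.sum_apply, Pi.smul_apply, smul_eq_mul]
  refine Finset.sum_congr rfl fun a _ => ?_
  rw [Measure.map_apply (D.sim a).continuous.measurable hS]

theorem IFSData.scaleBound (D : IFSData φ p r rmin rmax μ) {ρ : ℝ} (hρ : 0 < ρ) (hρ1 : ρ ≤ 1)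
    (g : V → ENNReal) (hg : Measurable g) (M : ENNReal)
    (h : ∀ s ψ, SimMap s ψ → rmin * ρ ≤ s → s ≤ ρ → ∫⁻ x, g (ψ x) ∂μ ≤ M) :
    ∫⁻ x, g x ∂μ ≤ M := by
  have hA : Nonempty A := by
    by_contra hA
    rw [not_nonempty_iff] at hA
    simpa using D.psum
  obtain ⟨a₀⟩ := hA
  have hmax : 0 < rmax := D.pos.trans_le ((D.lo a₀).trans (D.hi a₀))
  have hrmin1 : rmin < 1 := ((D.lo a₀).trans (D.hi a₀)).trans_lt D.lt_one
  have key : ∀ n : ℕ, ∀ s ψ, SimMap s ψ → rmin * ρ ≤ s → s * rmax ^ n ≤ ρ →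
      ∫⁻ x, g (ψ x) ∂μ ≤ M := by
    intro n
    induction n with
    | zero => intro s ψ hψ h1 h2; exact h s ψ hψ h1 (by simpa using h2)
    | succ n ih =>
      intro s ψ hψ h1 h2
      by_cases hs : s ≤ ρ
      · exact h s ψ hψ h1 hs
      push Not at hs
      have hs0 := hψ.1
      rw [D.lintegral (fun x => g (ψ x)) (hg.comp hψ.continuous.measurable)]
      calc _ ≤ ∑ a, ENNReal.ofReal (p a) * M := by
            refine Finset.sum_le_sum fun a _ => ?_
            gcongr
            refine ih (s * r a) (ψ ∘ φ a) (hψ.comp (D.sim a)) ?_ ?_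
            · rw [mul_comm]
              exact mul_le_mul hs.le (D.lo a) D.pos.le hs0.le
            · refine le_trans ?_ h2
              rw [pow_succ', mul_assoc]
              have := D.hi a
              gcongr
        _ = M := by rw [← Finset.sum_mul, D.psumE, one_mul]
  obtain ⟨n, hn⟩ := exists_pow_lt_of_lt_one hρ D.lt_one
  refine key n 1 id ⟨one_pos, fun x y => by simp⟩ ?_ (by simpa using hn.le)
  nlinarith [D.pos]

theorem IFSData.bdd [IsProbabilityMeasure μ] (D : IFSData φ p r rmin rmax μ) :
    ∃ R : ℝ, 0 < R ∧ ∀ᵐ x ∂μ, ‖x‖ ≤ R := by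
  have hA : Nonempty A := by
    by_contra hA
    rw [not_nonempty_iff] at hA
    simpa using D.psum
  obtain ⟨a₀⟩ := hA
  have hmax : 0 < rmax := D.pos.trans_le ((D.lo a₀).trans (D.hi a₀))
  let b : ℝ := ∑ a, ‖φ a 0‖
  have hb : ∀ a, ‖φ a 0‖ ≤ b := fun a =>
    Finset.single_le_sum (f := fun a => ‖φ a 0‖) (fun _ _ => norm_nonneg _) (Finset.mem_univ a)
  have hb0 : 0 ≤ b := (norm_nonneg _).trans (hb a₀)
  have h1r : 0 < 1 - rmax := by linarith [D.lt_one]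
  let R₀ := b / (1 - rmax)
  have hR₀ : rmax * R₀ + b = R₀ := by simp only [R₀]; field_simp; ring
  have hR₀0 : 0 ≤ R₀ := by positivity
  have hφ : ∀ a x, ‖φ a x‖ ≤ rmax * ‖x‖ + b := fun a x => by
    have h1 := (D.sim a).2 x 0
    have h2 := norm_sub_norm_le (φ a x) (φ a 0)
    have h3 := mul_le_mul_of_nonneg_right (D.hi a) (norm_nonneg x)
    rw [sub_zero] at h1
    linarith [hb a]
  have hmS : ∀ t : ℝ, MeasurableSet {x : V | t < ‖x‖} := fun t =>
    measurableSet_lt measurable_const measurable_norm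
  have hstep : ∀ t : ℝ, μ {x : V | R₀ + rmax * t < ‖x‖} ≤ μ {x : V | R₀ + t < ‖x‖} := by
    intro t
    rw [D.meas _ (hmS _)]
    calc _ ≤ ∑ a, ENNReal.ofReal (p a) * μ {x : V | R₀ + t < ‖x‖} := by
          refine Finset.sum_le_sum fun a _ => ?_
          gcongr
          intro x hx
          simp only [Set.mem_preimage, Set.mem_ofPred_eq] at hx ⊢
          have := hφ a x
          by_contra hcon
          push Not at hcon
          nlinarith
      _ = _ := by rw [← Finset.sum_mul, D.psumE, one_mul]
  have hiter : ∀ (n : ℕ) (t : ℝ), μ {x : V | R₀ + rmax ^ n * t < ‖x‖} ≤ μ {x : V | R₀ + t < ‖x‖} := by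
    intro n
    induction n with
    | zero => intro t; simp
    | succ n ih =>
      intro t
      have := (hstep (rmax ^ n * t)).trans (ih t)
      rwa [← mul_assoc, ← pow_succ'] at this
  have hall : ∀ m : ℕ, μ {x : V | R₀ + 1 < ‖x‖} ≤ μ {x : V | R₀ + (m + 1 : ℝ) < ‖x‖} := by
    intro m
    obtain ⟨n, hn⟩ := exists_pow_lt_of_lt_one (show (0:ℝ) < 1 / (m + 1) by positivity) D.lt_one
    refine le_trans ?_ (hiter n (m + 1))
    apply measure_mono
    intro x hx
    simp only [Set.mem_ofPred_eq] at hx ⊢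
    rw [lt_div_iff₀ (by positivity)] at hn
    linarith
  have hzero : Tendsto (fun m : ℕ => μ {x : V | R₀ + (m + 1 : ℝ) < ‖x‖}) atTop (𝓝 0) := by
    have hinter : (⋂ m : ℕ, {x : V | R₀ + (m + 1 : ℝ) < ‖x‖}) = ∅ := by
      ext x
      simp only [Set.mem_iInter, Set.mem_ofPred_eq, Set.mem_empty_iff_false, iff_false, not_forall, not_lt]
      obtain ⟨m, hm⟩ := exists_nat_ge ‖x‖
      exact ⟨m, by linarith⟩
    have := tendsto_measure_iInter_atTop (μ := μ) (s := fun m : ℕ => {x : V | R₀ + (m + 1 : ℝ) < ‖x‖})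
      (fun m => (hmS _).nullMeasurableSet) ?_ ⟨0, measure_ne_top _ _⟩
    · rwa [hinter, measure_empty] at this
    · intro m n hmn x hx
      simp only [Set.mem_ofPred_eq] at hx ⊢
      have : (m : ℝ) ≤ n := by exact_mod_cast hmn
      linarith
  refine ⟨R₀ + 1, by linarith, ?_⟩
  rw [ae_iff]
  simp only [not_le]
  exact le_antisymm (ge_of_tendsto' hzero hall) zero_le

theorem IFSData.full [IsProbabilityMeasure μ] (D : IFSData φ p r rmin rmax μ)
    (hirr : ¬ ∃ W : AffineSubspace ℝ V, (W : Set V).Nonempty ∧ W ≠ ⊤ ∧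
      ∀ a, φ a '' (W : Set V) ⊆ (W : Set V)) (W : AffineSubspace ℝ V) (hW : ∀ᵐ x ∂μ, x ∈ W) :
    W = ⊤ := by
  classical
  have hex : ∃ n : ℕ, ∃ W' : AffineSubspace ℝ V, W' ≤ W ∧ (∀ᵐ x ∂μ, x ∈ W') ∧
    Module.finrank ℝ W'.direction = n := ⟨_, W, le_rfl, hW, rfl⟩
  obtain ⟨W', hle, hW', hn⟩ := Nat.find_spec hex
  have hmin : ∀ W'' : AffineSubspace ℝ V, W'' ≤ W' → (∀ᵐ x ∂μ, x ∈ W'') → W' ≤ W'' := by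
    intro W'' h1 h2
    have h3 := Nat.find_min' hex ⟨W'', h1.trans hle, h2, rfl⟩
    rw [← hn] at h3
    have hd : W''.direction = W'.direction :=
      Submodule.eq_of_le_of_finrank_le (AffineSubspace.direction_le h1) h3
    obtain ⟨x, hx⟩ := h2.exists
    exact (AffineSubspace.eq_of_direction_eq_of_nonempty_of_le hd ⟨x, hx⟩ h1).ge
  have hinv : ∀ a, φ a '' (W' : Set V) ⊆ (W' : Set V) := by
    intro a
    obtain ⟨f, hf⟩ := (D.sim a).exists_affine
    have hcl : MeasurableSet (W' : Set V)ᶜ := (W'.closed_of_finiteDimensional).measurableSet.compl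
    have h0 : μ (φ a ⁻¹' (W' : Set V)ᶜ) = 0 := by
      have h1 : μ (W' : Set V)ᶜ = 0 := hW'
      rw [D.meas _ hcl, Finset.sum_eq_zero_iff] at h1
      have h2 := h1 a (Finset.mem_univ _)
      rcases mul_eq_zero.1 h2 with h3 | h3
      · rw [ENNReal.ofReal_eq_zero] at h3
        linarith [D.ppos a]
      · exact h3
    have h1 : ∀ᵐ x ∂μ, x ∈ W'.comap f := by
      rw [ae_iff]
      convert h0 using 2
      ext x
      simp [AffineSubspace.mem_comap, hf]
    have h2 := hmin (W' ⊓ W'.comap f) inf_le_left (by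
      filter_upwards [hW', h1] with x hx hx'
      exact ⟨hx, hx'⟩)
    rintro _ ⟨x, hx, rfl⟩
    have := (h2 hx).2
    rw [← hf]
    exact this
  by_contra hne
  obtain ⟨x, hx⟩ := hW'.exists
  refine hirr ⟨W', ⟨x, hx⟩, ?_, hinv⟩
  rintro rfl
  exact hne (top_le_iff.1 hle)

theorem IFSData.nondeg [IsProbabilityMeasure μ] (D : IFSData φ p r rmin rmax μ)
    (hirr : ¬ ∃ W : AffineSubspace ℝ V, (W : Set V).Nonempty ∧ W ≠ ⊤ ∧
      ∀ a, φ a '' (W : Set V) ⊆ (W : Set V)) :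
    ∃ c : ℝ, 0 < c ∧ c < 1 ∧ ∀ (l : V →L[ℝ] ℝ) (t : ℝ), ‖l‖ = 1 →
      c ≤ μ.real {x | c < |l x - t|} := by
  obtain ⟨R, hR, hbd⟩ := D.bdd
  let F : (V →L[ℝ] ℝ) × ℝ → V → ℝ := fun q x => min 1 |q.1 x - q.2|
  have hF0 : ∀ q x, 0 ≤ F q x := fun q x => le_min zero_le_one (abs_nonneg _)
  have hF1 : ∀ q x, F q x ≤ 1 := fun q x => min_le_left _ _
  have hFc : ∀ q, Continuous (F q) := fun q => by simp only [F]; fun_prop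
  have hFi : ∀ q, Integrable (F q) μ := fun q =>
    Integrable.of_bound (hFc q).aestronglyMeasurable 1 (.of_forall fun x => by
      rw [Real.norm_of_nonneg (hF0 q x)]; exact hF1 q x)
  have hcont : Continuous fun q => ∫ x, F q x ∂μ := by
    refine continuous_of_dominated (bound := fun _ => 1) (fun q => (hFc q).aestronglyMeasurable)
      (fun q => .of_forall fun x => ?_) (integrable_const _) (.of_forall fun x => ?_)
    · rw [Real.norm_of_nonneg (hF0 q x)]; exact hF1 q x
    · simp only [F]; fun_prop
  have hpos : ∀ q : (V →L[ℝ] ℝ) × ℝ, ‖q.1‖ = 1 → 0 < ∫ x, F q x ∂μ := by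
    rintro ⟨l, t⟩ hl
    simp only at hl
    refine lt_of_le_of_ne (integral_nonneg (hF0 _)) fun h0 => ?_
    have h1 := (integral_eq_zero_iff_of_nonneg (hF0 _) (hFi _)).1 h0.symm
    have h2 : ∀ᵐ x ∂μ, l x = t := by
      filter_upwards [h1] with x hx
      simp only [F, Pi.zero_apply] at hx
      rcases min_choice 1 |l x - t| with h | h
      · rw [h] at hx; norm_num at hx
      · rw [h] at hx; linarith [abs_eq_zero.1 hx]
    obtain ⟨x₀, hx₀⟩ := h2.exists
    have h3 := D.full hirr (AffineSubspace.mk' x₀ (LinearMap.ker (l : V →ₗ[ℝ] ℝ))) (by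
      filter_upwards [h2] with x hx
      rw [AffineSubspace.mem_mk']
      simp [hx, hx₀])
    have h4 : l = 0 := by
      ext v
      have : v + x₀ ∈ AffineSubspace.mk' x₀ (LinearMap.ker (l : V →ₗ[ℝ] ℝ)) := by
        rw [h3]; trivial
      rw [AffineSubspace.mem_mk'] at this
      simpa using this
    rw [h4, norm_zero] at hl
    norm_num at hl
  have : ProperSpace (V →L[ℝ] ℝ) := FiniteDimensional.proper_real _
  have hK : IsCompact ((sphere (0 : V →L[ℝ] ℝ) 1) ×ˢ (Set.Icc (-(R+1)) (R+1))) :=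
    (isCompact_sphere _ _).prod isCompact_Icc
  obtain ⟨m', hm'0, hm'⟩ := hK.exists_forall_le' hcont.continuousOn (a := 0) (by
    rintro q ⟨hq, -⟩
    exact hpos q (by simpa using hq))
  let m := min m' 1
  have hm0 : 0 < m := lt_min hm'0 one_pos
  have hm1 : m ≤ 1 := min_le_right _ _
  have hall : ∀ (l : V →L[ℝ] ℝ) (t : ℝ), ‖l‖ = 1 → m ≤ ∫ x, F (l, t) x ∂μ := by
    intro l t hl
    by_cases ht : t ∈ Set.Icc (-(R+1)) (R+1)
    · exact (min_le_left _ _).trans (hm' (l, t) ⟨by simpa using hl, ht⟩)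
    · have : ∫ x, F (l, t) x ∂μ = ∫ x, (1:ℝ) ∂μ := by
        apply integral_congr_ae
        filter_upwards [hbd] with x hx
        simp only [F]
        apply min_eq_left
        have h1 := l.le_opNorm x
        rw [hl, one_mul, Real.norm_eq_abs] at h1
        have h2 := abs_le.1 (h1.trans hx)
        by_contra hcon
        push Not at hcon
        have h3 := abs_lt.1 hcon
        exact ht ⟨by linarith, by linarith⟩
      rw [this]
      simpa using hm1
  refine ⟨m / 2, by linarith, by linarith, fun l t hl => ?_⟩
  have hS : MeasurableSet {x | m / 2 < |l x - t|} :=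
    measurableSet_lt measurable_const (by fun_prop)
  have h1 : ∫ x, F (l, t) x ∂μ ≤ ∫ x, (m / 2 + Set.indicator {x | m / 2 < |l x - t|} 1 x) ∂μ := by
    refine integral_mono (hFi _) ((integrable_const _).add ((integrable_const (1:ℝ)).indicator hS)) ?_
    intro x
    by_cases hx : m / 2 < |l x - t|
    · have : x ∈ {x | m / 2 < |l x - t|} := hx
      simp only [Set.indicator_of_mem this, Pi.one_apply]
      linarith [hF1 (l, t) x]
    · have : x ∉ {x | m / 2 < |l x - t|} := hx
      simp only [Set.indicator_of_notMem this]
      push Not at hx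
      have : F (l, t) x ≤ |l x - t| := min_le_right _ _
      linarith
  have hind : Integrable (Set.indicator {x | m / 2 < |l x - t|} (1 : V → ℝ)) μ :=
    (integrable_const (1:ℝ)).indicator hS
  rw [integral_add (integrable_const _) hind,
    integral_indicator_one hS] at h1
  simp only [integral_const, probReal_univ, one_smul] at h1
  linarith [hall l t hl]

theorem IFSData.decay_step [IsProbabilityMeasure μ] (D : IFSData φ p r rmin rmax μ)
    (hirr : ¬ ∃ W : AffineSubspace ℝ V, (W : Set V).Nonempty ∧ W ≠ ⊤ ∧
      ∀ a, φ a '' (W : Set V) ⊆ (W : Set V)) :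
    ∃ c κ ε₀ : ℝ, 0 < c ∧ c < 1 ∧ 0 < κ ∧ κ < 1 ∧ 0 < ε₀ ∧ ∀ (ε m : ℝ), ε ≤ ε₀ → 0 ≤ m →
      (∀ (l : V →L[ℝ] ℝ) (t : ℝ), ‖l‖ = 1 → μ.real {x | |l x - t| ≤ ε / κ} ≤ m) →
      ∀ (l : V →L[ℝ] ℝ) (t : ℝ), ‖l‖ = 1 → μ.real {x | |l x - t| ≤ ε} ≤ (1 - c) * m := by
  obtain ⟨R, hR, hbd⟩ := D.bdd
  obtain ⟨c, hc0, hc1, hc⟩ := D.nondeg hirr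
  have hA : Nonempty A := by
    by_contra hA
    rw [not_nonempty_iff] at hA
    simpa using D.psum
  obtain ⟨a₀⟩ := hA
  have hrmin1 : rmin < 1 := ((D.lo a₀).trans (D.hi a₀)).trans_lt D.lt_one
  have hrmin := D.pos
  let ρ := min 1 (c / (4 * R))
  have hρ : 0 < ρ := lt_min one_pos (by positivity)
  have hρ1 : ρ ≤ 1 := min_le_left _ _
  have hρR : ρ * (2 * R) ≤ c / 2 := by
    have h1 : ρ ≤ c / (4 * R) := min_le_right _ _
    calc ρ * (2 * R) ≤ c / (4 * R) * (2 * R) := by gcongr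
      _ = c / 2 := by field_simp; ring
  refine ⟨c, rmin * ρ, c / 2, hc0, hc1, by positivity, by nlinarith, by positivity, ?_⟩
  intro ε m hε hm hM l t hl
  let S1 := {x | |l x - t| ≤ ε}
  let S2 := {x | c < |l x - t|}
  have hS1 : MeasurableSet S1 := measurableSet_le (by fun_prop) measurable_const
  have hS2 : MeasurableSet S2 := measurableSet_lt measurable_const (by fun_prop)
  have key := D.scaleBound hρ hρ1 (fun x => S1.indicator 1 x + ENNReal.ofReal m * S2.indicator 1 x)
    ((measurable_one.indicator hS1).add ((measurable_one.indicator hS2).const_mul _))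
    (ENNReal.ofReal m) (by
    intro s ψ hψ hs1 hs2
    have hs0 := hψ.1
    by_cases hex : ∃ x, ‖x‖ ≤ R ∧ ψ x ∈ S1
    · obtain ⟨x, hx, hxS⟩ := hex
      have hxS' : |l (ψ x) - t| ≤ ε := hxS
      have h2 : ∀ᵐ y ∂μ, ψ y ∉ S2 := by
        filter_upwards [hbd] with y hy hyS
        have hyS' : c < |l (ψ y) - t| := hyS
        have h3 := l.le_opNorm (ψ y - ψ x)
        rw [hl, one_mul, hψ.2, map_sub, Real.norm_eq_abs] at h3
        have h4 : s * ‖y - x‖ ≤ ρ * (2 * R) := by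
          have : ‖y - x‖ ≤ 2 * R := (norm_sub_le _ _).trans (by linarith)
          gcongr
        have h5 : |l (ψ y) - t| ≤ |l (ψ y) - l (ψ x)| + |l (ψ x) - t| := abs_sub_le _ _ _
        linarith
      calc _ = ∫⁻ y, (ψ ⁻¹' S1).indicator 1 y ∂μ := by
            apply lintegral_congr_ae
            filter_upwards [h2] with y hy
            rw [Set.indicator_of_notMem hy, mul_zero, add_zero]
            rfl
        _ = μ (ψ ⁻¹' S1) := lintegral_indicator_one (hψ.continuous.measurable hS1)
        _ ≤ _ := by
            obtain ⟨l', t', hl', hlt⟩ := hψ.pullback l hl t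
            have h6 := hM l' t' hl'
            rw [ENNReal.le_ofReal_iff_toReal_le (measure_ne_top _ _) hm]
            refine le_trans ?_ h6
            apply measureReal_mono
            · intro y hy
              have hy' : |l (ψ y) - t| ≤ ε := hy
              rw [hlt, abs_mul, abs_of_pos hs0] at hy'
              change |l' y - t'| ≤ _
              rw [le_div_iff₀ (by positivity)]
              have := mul_le_mul_of_nonneg_right hs1 (abs_nonneg (l' y - t'))
              linarith
            · exact measure_ne_top _ _
    · push Not at hex
      calc _ ≤ ∫⁻ y, ENNReal.ofReal m ∂μ := by
            apply lintegral_mono_ae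
            filter_upwards [hbd] with y hy
            rw [Set.indicator_of_notMem (hex y hy), zero_add]
            refine mul_le_of_le_one_right' ?_
            exact Set.indicator_le_self' (f := fun _ => 1) (fun _ _ => zero_le) _
        _ = _ := by simp)
  rw [lintegral_add_left (measurable_one.indicator hS1), lintegral_const_mul _ (measurable_one.indicator hS2),
    lintegral_indicator_one hS1, lintegral_indicator_one hS2] at key
  have h7 := hc l t hl
  rw [← ofReal_measureReal (s := S1), ← ofReal_measureReal (s := S2), ← ENNReal.ofReal_mul hm,
    ← ENNReal.ofReal_add measureReal_nonneg (mul_nonneg hm measureReal_nonneg),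
    ENNReal.ofReal_le_ofReal_iff hm] at key
  have h8 : m * c ≤ m * μ.real S2 := mul_le_mul_of_nonneg_left h7 hm
  change μ.real S1 ≤ _
  linarith

theorem IFSData.decay [IsProbabilityMeasure μ] (D : IFSData φ p r rmin rmax μ)
    (hirr : ¬ ∃ W : AffineSubspace ℝ V, (W : Set V).Nonempty ∧ W ≠ ⊤ ∧
      ∀ a, φ a '' (W : Set V) ⊆ (W : Set V)) :
    ∃ α C : ℝ, 0 < α ∧ 0 < C ∧ ∀ (l : V →L[ℝ] ℝ) (t ε : ℝ), ‖l‖ = 1 → 0 < ε →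
      μ.real {x | |l x - t| ≤ ε} ≤ C * ε ^ α := by
  obtain ⟨c, κ, ε₀, hc0, hc1, hκ0, hκ1, hε₀, h⟩ := D.decay_step hirr
  have hiter : ∀ (n : ℕ) (l : V →L[ℝ] ℝ) (t : ℝ), ‖l‖ = 1 →
      μ.real {x | |l x - t| ≤ κ ^ n * ε₀} ≤ (1 - c) ^ n := by
    intro n
    induction n with
    | zero => intro l t hl; simp
    | succ n ih =>
      intro l t hl
      rw [pow_succ' (1 - c)]
      refine h _ _ ?_ (pow_nonneg (by linarith) _) ?_ l t hl
      · have := pow_le_one₀ (n := n + 1) hκ0.le hκ1.le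
        nlinarith
      · have : κ ^ (n + 1) * ε₀ / κ = κ ^ n * ε₀ := by
          rw [pow_succ]; field_simp
        rw [this]; exact ih
  have hlogκ : Real.log κ < 0 := Real.log_neg hκ0 hκ1
  have hlogc : Real.log (1 - c) < 0 := Real.log_neg (by linarith) (by linarith)
  let α := Real.log (1 - c) / Real.log κ
  have hα : 0 < α := div_pos_of_neg_of_neg hlogc hlogκ
  have hκα : κ ^ α = 1 - c := by
    rw [Real.rpow_def_of_pos hκ0, mul_div_cancel₀ _ hlogκ.ne, Real.exp_log (by linarith)]
  refine ⟨α, (κ * ε₀) ^ (-α), hα, by positivity, fun l t ε hl hε => ?_⟩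
  have hform : (κ * ε₀) ^ (-α) * ε ^ α = (ε / (κ * ε₀)) ^ α := by
    rw [Real.div_rpow hε.le (by positivity), Real.rpow_neg (by positivity)]; field_simp
  rw [hform]
  by_cases hbig : ε₀ < ε
  · refine measureReal_le_one.trans (Real.one_le_rpow ?_ hα.le)
    rw [le_div_iff₀ (by positivity)]
    nlinarith
  push Not at hbig
  obtain ⟨n, hn1, hn2⟩ := exists_nat_pow_near_of_lt_one (x := ε / ε₀) (y := κ) (by positivity)
    ((div_le_one hε₀).2 hbig) hκ0 hκ1
  have h1 : ε ≤ κ ^ n * ε₀ := by rwa [div_le_iff₀ hε₀] at hn2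
  calc _ ≤ μ.real {x | |l x - t| ≤ κ ^ n * ε₀} :=
        measureReal_mono (fun x hx => le_trans hx h1) (measure_ne_top _ _)
    _ ≤ (1 - c) ^ n := hiter n l t hl
    _ = (κ ^ n) ^ α := by
        rw [← hκα, ← Real.rpow_natCast, ← Real.rpow_natCast, ← Real.rpow_mul hκ0.le,
          ← Real.rpow_mul hκ0.le, mul_comm]
    _ ≤ _ := by
        apply Real.rpow_le_rpow (by positivity) _ hα.le
        rw [lt_div_iff₀ hε₀, pow_succ] at hn1
        rw [le_div_iff₀ (by positivity)]
        linarith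

end ifs

theorem simplex_det_bound (d : ℕ) (A : Matrix (Fin (d+1)) (Fin (d+1)) ℝ) (Q η : ℝ)
    (h0 : ∀ i, |A i 0| ≤ Q) (h1 : ∀ i (j : Fin d), |A i j.succ| ≤ η) :
    |A.det| ≤ (d+1).factorial * (Q * η ^ d) := by
  rw [Matrix.det_apply]
  refine (Finset.abs_sum_le_sum_abs _ _).trans ?_
  have : ∀ σ ∈ (Finset.univ : Finset (Equiv.Perm (Fin (d+1)))),
      |Equiv.Perm.sign σ • ∏ i, A (σ i) i| ≤ Q * η ^ d := by
    intro σ _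
    have h : |Equiv.Perm.sign σ • ∏ i, A (σ i) i| = |∏ i, A (σ i) i| := by
      rcases Int.units_eq_one_or (Equiv.Perm.sign σ) with h | h <;> simp [h]
    rw [h, Finset.abs_prod, Fin.prod_univ_succ]
    have hp : ∏ j : Fin d, |A (σ j.succ) j.succ| ≤ η ^ d := by
      refine (Finset.prod_le_prod (fun _ _ => abs_nonneg _) (fun j _ => h1 (σ j.succ) j)).trans ?_
      simp
    exact mul_le_mul (h0 _) hp (Finset.prod_nonneg fun _ _ => abs_nonneg _)
      ((abs_nonneg _).trans (h0 0))
  refine (Finset.sum_le_card_nsmul _ _ _ this).trans ?_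
  rw [Finset.card_univ, Fintype.card_perm, Fintype.card_fin, nsmul_eq_mul]

theorem simplex_lemma (d : ℕ) (Q η : ℝ) (S : Set ((Fin d → ℤ) × ℕ)) (y : Fin d → ℝ)
    (hne : S.Nonempty)
    (hS : ∀ z ∈ S, 0 < z.2 ∧ (z.2 : ℝ) ≤ Q ∧ ∀ i, |(z.1 i : ℝ) / z.2 - y i| ≤ η)
    (hsmall : ((d+1).factorial : ℝ) * (Q * (Q * η) ^ d) < 1) :
    ∃ (u : Fin d → ℝ) (t : ℝ), u ≠ 0 ∧ ∀ z ∈ S, ∑ i, u i * ((z.1 i : ℝ) / z.2) = t := by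
  classical
  let v : (Fin d → ℤ) × ℕ → (Fin (d+1) → ℤ) := fun z => Fin.cons (z.2 : ℤ) z.1
  let w : (Fin d → ℤ) × ℕ → (Fin (d+1) → ℝ) := fun z j => (v z j : ℝ)
  have hspan : Submodule.span ℝ (w '' S) < ⊤ := by
    rw [lt_top_iff_ne_top]
    intro htop
    obtain ⟨b, hbs, hbspan, hli⟩ := exists_linearIndependent ℝ (w '' S)
    let B : Module.Basis b ℝ (Fin (d+1) → ℝ) := Module.Basis.mk hli (by
      rw [Subtype.range_coe, hbspan, htop])
    have : Finite b := Module.Finite.finite_basis B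
    have : Fintype b := Fintype.ofFinite b
    have hcard : Fintype.card b = d + 1 := by
      rw [← Module.finrank_eq_card_basis B]; simp
    let e := (Fintype.equivFinOfCardEq hcard).symm
    have hmem : ∀ i, ∃ z ∈ S, w z = (e i : Fin (d+1) → ℝ) := fun i => hbs (e i).2
    choose z hzS hz using hmem
    let N : Matrix (Fin (d+1)) (Fin (d+1)) ℤ := Matrix.of fun i => v (z i)
    let M : Matrix (Fin (d+1)) (Fin (d+1)) ℝ := N.map (Int.castRingHom ℝ)
    have hMli : LinearIndependent ℝ M.row := by
      have h2 := hli.comp e e.injective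
      have heq : M.row = Subtype.val ∘ e := by
        ext i j
        simp only [Function.comp_apply, ← hz]
        rfl
      rw [heq]
      exact h2
    have hdet : M.det ≠ 0 := by
      have := Matrix.linearIndependent_rows_iff_isUnit.1 hMli
      exact ((Matrix.isUnit_iff_isUnit_det _).1 this).ne_zero
    have hMN : M.det = (N.det : ℝ) := (RingHom.map_det (Int.castRingHom ℝ) N).symm
    have hge : 1 ≤ |M.det| := by
      rw [hMN] at hdet ⊢
      have : N.det ≠ 0 := by exact_mod_cast hdet
      exact_mod_cast Int.one_le_abs this
    let B' : Matrix (Fin (d+1)) (Fin (d+1)) ℝ := Matrix.of fun i =>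
      Fin.cons (M i 0) (fun j => M i j.succ - y j * M i 0)
    have hBdet : M.det = B'.det := by
      rw [← Matrix.det_transpose M, ← Matrix.det_transpose B']
      refine Matrix.det_eq_of_forall_row_eq_smul_add_const (Fin.cons 0 y) 0 rfl ?_
      intro i j
      refine Fin.cases ?_ (fun k => ?_) i
      · simp [B']
      · simp [B']
    have hb : |B'.det| ≤ (d+1).factorial * (Q * (Q * η) ^ d) := by
      apply simplex_det_bound
      · intro i
        have := (hS _ (hzS i)).2.1
        simpa [B', M, N, v] using this
      · intro i j
        obtain ⟨h1, h2, h3⟩ := hS _ (hzS i)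
        have h4 : B' i j.succ = (z i).2 * (((z i).1 j : ℝ) / (z i).2 - y j) := by
          have : ((z i).2 : ℝ) ≠ 0 := by positivity
          simp [B', M, N, v]
          field_simp
        rw [h4, abs_mul, Nat.abs_cast]
        exact mul_le_mul h2 (h3 j) (abs_nonneg _) (by linarith [(Nat.cast_nonneg (z i).2 : (0:ℝ) ≤ _)])
    rw [hBdet] at hge
    linarith
  obtain ⟨f, hf0, hf⟩ := Submodule.exists_le_ker_of_lt_top _ hspan
  have hfv : ∀ x : Fin (d+1) → ℝ, f x = x 0 * f (Pi.single 0 1) + ∑ i : Fin d, x i.succ * f (Pi.single i.succ 1) := by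
    intro x
    rw [LinearMap.pi_apply_eq_sum_univ f x, Fin.sum_univ_succ]
    simp only [smul_eq_mul]
    have hs : ∀ i : Fin (d+1), (fun j => if i = j then (1:ℝ) else 0) = Pi.single i 1 := by
      intro i
      ext j
      simp [Pi.single_apply, eq_comm]
    simp only [hs]
  have hz : ∀ z ∈ S, ∑ i, f (Pi.single i.succ 1) * ((z.1 i : ℝ) / z.2) = - f (Pi.single 0 1) := by
    intro z hz
    have h1 : f (w z) = 0 := hf (Submodule.subset_span ⟨z, hz, rfl⟩)
    rw [hfv] at h1
    have hq : (z.2 : ℝ) ≠ 0 := by have := (hS z hz).1; positivity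
    simp only [w, v, Fin.cons_zero, Fin.cons_succ, Int.cast_natCast] at h1
    have : ∑ i, f (Pi.single i.succ 1) * ((z.1 i : ℝ) / z.2) = (∑ i : Fin d, (z.1 i : ℝ) * f (Pi.single i.succ 1)) / z.2 := by
      rw [Finset.sum_div]
      exact Finset.sum_congr rfl fun i _ => by ring
    rw [this]
    field_simp
    linarith
  refine ⟨fun i => f (Pi.single i.succ 1), - f (Pi.single 0 1), ?_, hz⟩
  intro hu
  obtain ⟨z, hzS⟩ := hne
  have h1 := hz z hzS
  have h2 : ∀ i : Fin d, f (Pi.single i.succ 1) = 0 := fun i => congrFun hu i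
  simp only [h2, zero_mul, Finset.sum_const_zero] at h1
  apply hf0
  ext i
  refine Fin.cases ?_ (fun k => ?_) i
  · simp; linarith
  · simp [h2]

theorem euclid_norm_le (d : ℕ) (v : EuclideanSpace ℝ (Fin d)) (δ : ℝ) (hδ : 0 ≤ δ)
    (h : ∀ i, |v i| ≤ δ) : ‖v‖ ≤ d * δ := by
  refine abs_le_of_sq_le_sq' ?_ (by positivity) |>.2
  rw [EuclideanSpace.norm_sq_eq]
  have h1 : ∑ i, ‖v i‖ ^ 2 ≤ ∑ _i : Fin d, δ ^ 2 :=
    Finset.sum_le_sum fun i _ => pow_le_pow_left₀ (norm_nonneg _) (h i) 2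
  refine h1.trans ?_
  simp only [Finset.sum_const, Finset.card_univ, Fintype.card_fin, nsmul_eq_mul]
  rw [mul_pow]
  have : (d : ℝ) ≤ (d : ℝ) ^ 2 := by
    exact_mod_cast Nat.le_self_pow two_ne_zero d
  gcongr

/-- Points `δ`-close to a rational of denominator at most `Q`. -/
def nearRat (d : ℕ) (Q δ : ℝ) : Set (EuclideanSpace ℝ (Fin d)) :=
  {x | ∃ z : (Fin d → ℤ) × ℕ, 0 < z.2 ∧ (z.2 : ℝ) ≤ Q ∧ ∀ i, |x i - (z.1 i : ℝ) / z.2| ≤ δ}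

theorem nearRat_meas (d : ℕ) (Q δ : ℝ) : MeasurableSet (nearRat d Q δ) := by
  have : nearRat d Q δ = ⋃ z : (Fin d → ℤ) × ℕ,
      {x | 0 < z.2 ∧ (z.2 : ℝ) ≤ Q ∧ ∀ i, |x i - (z.1 i : ℝ) / z.2| ≤ δ} := by
    ext x; simp [nearRat]
  rw [this]
  refine MeasurableSet.iUnion fun z => ?_
  refine MeasurableSet.inter (MeasurableSet.const _) (MeasurableSet.inter (MeasurableSet.const _) ?_)
  apply IsClosed.measurableSet
  have : {x : EuclideanSpace ℝ (Fin d) | ∀ i, |x i - (z.1 i : ℝ) / z.2| ≤ δ} =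
      ⋂ i, {x : EuclideanSpace ℝ (Fin d) | |x i - (z.1 i : ℝ) / z.2| ≤ δ} := by
    ext x; simp
  change IsClosed {x : EuclideanSpace ℝ (Fin d) | ∀ i, |x i - (z.1 i : ℝ) / z.2| ≤ δ}
  rw [this]
  exact isClosed_iInter fun i => isClosed_le (by fun_prop) continuous_const

theorem nearRat_hyperplane (d : ℕ) (Q δ η : ℝ) (hδ : 0 ≤ δ) (y : EuclideanSpace ℝ (Fin d))
    (hsmall : ((d+1).factorial : ℝ) * (Q * (Q * (η + δ)) ^ d) < 1)
    (hne : (nearRat d Q δ ∩ closedBall y η).Nonempty) :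
    ∃ (l : EuclideanSpace ℝ (Fin d) →L[ℝ] ℝ) (t : ℝ), ‖l‖ = 1 ∧
      ∀ x ∈ nearRat d Q δ ∩ closedBall y η, |l x - t| ≤ d * δ := by
  let S : Set ((Fin d → ℤ) × ℕ) := {z | 0 < z.2 ∧ (z.2 : ℝ) ≤ Q ∧
    ∃ x ∈ closedBall y η, ∀ i, |x i - (z.1 i : ℝ) / z.2| ≤ δ}
  have hSne : S.Nonempty := by
    obtain ⟨x, ⟨z, h1, h2, h3⟩, hx⟩ := hne
    exact ⟨z, h1, h2, x, hx, h3⟩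
  obtain ⟨u, t, hu, hut⟩ := simplex_lemma d Q (η + δ) S y hSne (by
    rintro z ⟨h1, h2, x, hx, h3⟩
    refine ⟨h1, h2, fun i => ?_⟩
    have h4 : |x i - y i| ≤ η := by
      have := PiLp.norm_apply_le (x - y) i
      rw [mem_closedBall, dist_eq_norm] at hx
      simpa using this.trans hx
    have h5 := h3 i
    rw [abs_le] at h4 h5 ⊢
    constructor <;> linarith) hsmall
  let U : EuclideanSpace ℝ (Fin d) := WithLp.toLp 2 u
  have hU : U ≠ 0 := fun h => hu (by ext i; simpa [U] using congrArg (fun v : EuclideanSpace ℝ (Fin d) => v i) h)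
  have hU' : ‖U‖ ≠ 0 := norm_ne_zero_iff.2 hU
  refine ⟨‖U‖⁻¹ • innerSL ℝ U, ‖U‖⁻¹ * t, ?_, ?_⟩
  · rw [norm_smul, innerSL_apply_norm, norm_inv, norm_norm, inv_mul_cancel₀ hU']
  · rintro x ⟨⟨z, h1, h2, h3⟩, hx⟩
    let w : EuclideanSpace ℝ (Fin d) := WithLp.toLp 2 fun i => (z.1 i : ℝ) / z.2
    have hw : innerSL ℝ U w = t := by
      rw [← hut z ⟨h1, h2, x, hx, h3⟩]
      simp [U, w, PiLp.inner_apply, mul_comm]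
    have h5 : (‖U‖⁻¹ • innerSL ℝ U) x - ‖U‖⁻¹ * t = (‖U‖⁻¹ • innerSL ℝ U) (x - w) := by
      rw [map_sub, ← hw]; rfl
    rw [h5]
    have h6 := (‖U‖⁻¹ • innerSL ℝ U).le_opNorm (x - w)
    rw [norm_smul, innerSL_apply_norm, norm_inv, norm_norm, inv_mul_cancel₀ hU', one_mul] at h6
    exact h6.trans (euclid_norm_le d _ δ hδ (by simpa [w] using h3))

theorem IFSData.nearRat_bound {d : ℕ} (hd : 0 < d) {A : Type*} [Fintype A]
    {φ : A → EuclideanSpace ℝ (Fin d) → EuclideanSpace ℝ (Fin d)} {p r : A → ℝ} {rmin rmax : ℝ}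
    {μ : Measure (EuclideanSpace ℝ (Fin d))} [IsProbabilityMeasure μ]
    (D : IFSData φ p r rmin rmax μ) {α C : ℝ} (hα : 0 < α) (hC : 0 < C)
    (hdec : ∀ (l : EuclideanSpace ℝ (Fin d) →L[ℝ] ℝ) (t ε : ℝ), ‖l‖ = 1 → 0 < ε →
      μ.real {x | |l x - t| ≤ ε} ≤ C * ε ^ α) :
    ∃ C' : ℝ, 0 < C' ∧ ∀ Q δ : ℝ, 1 ≤ Q → 0 < δ →
      μ (nearRat d Q δ) ≤ ENNReal.ofReal (C' * (δ * Q ^ (((d:ℝ) + 1) / d)) ^ α) := by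
  obtain ⟨R, hR, hbd⟩ := D.bdd
  have hrmin := D.pos
  have hd' : (0:ℝ) < d := by exact_mod_cast hd
  let f : ℝ := (d+1).factorial
  have hf : 0 < f := by simp only [f]; positivity
  let c₁ : ℝ := 1 / ((R + 1) * (f + 1))
  have hc₁ : 0 < c₁ := by positivity
  have hc₁1 : c₁ ≤ 1 := by
    simp only [c₁]
    rw [div_le_one (by positivity)]
    nlinarith
  have hfc : f * ((R + 1) * c₁) ^ d < 1 := by
    have h1 : (R + 1) * c₁ = 1 / (f + 1) := by simp only [c₁]; field_simp
    have h2 : 1 / (f + 1) ≤ 1 := by rw [div_le_one (by positivity)]; linarith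
    have h3 : (1 / (f + 1)) ^ d ≤ 1 / (f + 1) := pow_le_of_le_one (by positivity) h2 hd.ne'
    rw [h1]
    calc f * (1 / (f + 1)) ^ d ≤ f * (1 / (f + 1)) := by gcongr
      _ < 1 := by rw [mul_one_div, div_lt_one (by positivity)]; linarith
  refine ⟨C * (d / (rmin * c₁)) ^ α + c₁ ^ (-α), by positivity, fun Q δ hQ hδ => ?_⟩
  set T : ℝ := Q ^ (((d:ℝ) + 1) / d) with hT
  have hQ0 : 0 < Q := by linarith
  have hT0 : 0 < T := by positivity
  have hT1 : 1 ≤ T := Real.one_le_rpow hQ (by positivity)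
  have hTd : T ^ d = Q ^ (d + 1) := by
    rw [hT, ← Real.rpow_natCast, ← Real.rpow_mul hQ0.le, ← Real.rpow_natCast]
    congr 1
    field_simp
    push_cast
    ring
  let ρ := c₁ / T
  have hρ : 0 < ρ := by positivity
  have hρ1 : ρ ≤ 1 := by simp only [ρ]; rw [div_le_one hT0]; linarith
  rw [add_mul]
  by_cases hcase : ρ < δ
  · refine prob_le_one.trans ?_
    rw [ENNReal.one_le_ofReal]
    have h1 : c₁ ≤ δ * T := by
      simp only [ρ] at hcase
      rw [div_lt_iff₀ hT0] at hcase
      exact hcase.le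
    have h2 : 1 ≤ c₁ ^ (-α) * (δ * T) ^ α := by
      calc 1 = c₁ ^ (-α) * c₁ ^ α := by rw [← Real.rpow_add hc₁]; simp
        _ ≤ _ := by gcongr
    have h3 : 0 ≤ C * (d / (rmin * c₁)) ^ α * (δ * T) ^ α := by positivity
    linarith
  push Not at hcase
  have hmain : ∫⁻ x, (nearRat d Q δ).indicator 1 x ∂μ ≤
      ENNReal.ofReal (C * (d / (rmin * c₁)) ^ α * (δ * T) ^ α) := by
    refine D.scaleBound hρ hρ1 _ (measurable_one.indicator (nearRat_meas d Q δ)) _ ?_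
    intro s ψ hψ hs1 hs2
    have hs0 := hψ.1
    have hE : ∫⁻ x, (nearRat d Q δ).indicator 1 (ψ x) ∂μ = μ (ψ ⁻¹' nearRat d Q δ) :=
      lintegral_indicator_one (hψ.continuous.measurable (nearRat_meas d Q δ))
    have hball : ∀ᵐ x ∂μ, ψ x ∈ closedBall (ψ 0) (ρ * R) := by
      filter_upwards [hbd] with x hx
      rw [mem_closedBall, dist_eq_norm, hψ.2, sub_zero]
      gcongr
    rw [hE]
    by_cases hne : (nearRat d Q δ ∩ closedBall (ψ 0) (ρ * R)).Nonempty
    · obtain ⟨l, t, hl, hlt⟩ := nearRat_hyperplane d Q δ (ρ * R) hδ.le (ψ 0) (by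
        refine lt_of_le_of_lt ?_ hfc
        refine mul_le_mul_of_nonneg_left ?_ hf.le
        calc Q * (Q * (ρ * R + δ)) ^ d ≤ Q * (Q * (ρ * R + ρ)) ^ d := by gcongr
          _ = Q ^ (d + 1) * ((R + 1) * c₁ / T) ^ d := by
              rw [mul_pow, pow_succ]; simp only [ρ]
              rw [show c₁ / T * R + c₁ / T = (R + 1) * c₁ / T by ring]; ring
          _ = ((R + 1) * c₁) ^ d := by
              rw [div_pow, ← hTd]; field_simp
          _ ≤ _ := le_rfl) hne
      obtain ⟨l', t', hl', hlt'⟩ := hψ.pullback l hl t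
      have h1 : μ (ψ ⁻¹' nearRat d Q δ) ≤ μ {x | |l' x - t'| ≤ d * δ / (rmin * ρ)} := by
        apply measure_mono_ae
        filter_upwards [hball] with x hx hxn
        have h2 := hlt (ψ x) ⟨hxn, hx⟩
        rw [hlt', abs_mul, abs_of_pos hs0] at h2
        change |l' x - t'| ≤ d * δ / (rmin * ρ)
        rw [le_div_iff₀ (by positivity)]
        have := mul_le_mul_of_nonneg_right hs1 (abs_nonneg (l' x - t'))
        linarith
      refine h1.trans ?_
      rw [ENNReal.le_ofReal_iff_toReal_le (measure_ne_top _ _) (by positivity)]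
      refine (hdec l' t' _ hl' (by positivity)).trans (le_of_eq ?_)
      rw [mul_assoc, ← Real.mul_rpow (by positivity) (by positivity)]
      congr 2
      simp only [ρ]
      field_simp
    · have : μ (ψ ⁻¹' nearRat d Q δ) = 0 := by
        rw [← nonpos_iff_eq_zero, ← measure_empty (μ := μ)]
        apply measure_mono_ae
        filter_upwards [hball] with x hx hxn
        exact hne ⟨_, hxn, hx⟩
      rw [this]
      exact zero_le
  rw [lintegral_indicator_one (nearRat_meas d Q δ)] at hmain
  refine hmain.trans (ENNReal.ofReal_le_ofReal ?_)
  have : 0 ≤ c₁ ^ (-α) * (δ * T) ^ α := by positivity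
  linarith

theorem condense {α β : ℝ} (hα : 0 < α) (hβ : 0 < β) (Ψ : ℕ → ℝ) (hΨ : ∀ n, 0 < Ψ n)
    (hanti : Antitone Ψ) (hs : Summable fun n : ℕ => (n : ℝ) ^ (β - 1) * Ψ n ^ α) :
    Summable fun k : ℕ => ((2:ℝ) ^ k) ^ β * Ψ (2 ^ k) ^ α := by
  rw [← summable_nat_add_iff 1]
  set F : ℕ → ℝ := fun n : ℕ => (n : ℝ) ^ (β - 1) * Ψ n ^ α with hF
  have hF0 : ∀ n, 0 ≤ F n := fun n => by have := hΨ n; simp only [hF]; positivity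
  have hblock : ∀ k : ℕ, ((2:ℝ) ^ (k+1)) ^ β * Ψ (2 ^ (k+1)) ^ α ≤
      2 * 2 ^ β * ∑ n ∈ Finset.Ico (2 ^ k + 1) (2 ^ (k+1) + 1), F n := by
    intro k
    have h1 : ∀ n ∈ Finset.Ico (2 ^ k + 1) (2 ^ (k+1) + 1),
        ((2:ℝ) ^ k) ^ β / 2 ^ (k+1) * Ψ (2 ^ (k+1)) ^ α ≤ F n := by
      intro n hn
      rw [Finset.mem_Ico] at hn
      have hn1 : (2:ℝ) ^ k ≤ n := by exact_mod_cast (show 2 ^ k ≤ n by omega)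
      have hn2 : (n:ℝ) ≤ 2 ^ (k+1) := by exact_mod_cast (show n ≤ 2 ^ (k+1) by omega)
      have hn0 : (0:ℝ) < n := lt_of_lt_of_le (by positivity) hn1
      have hΨn : Ψ (2 ^ (k+1)) ≤ Ψ n := hanti (by omega)
      have hp := hΨ (2 ^ (k+1))
      simp only [hF]
      rw [Real.rpow_sub_one hn0.ne']
      gcongr
    have h2 := Finset.card_nsmul_le_sum _ _ _ h1
    rw [Nat.card_Ico, show 2 ^ (k+1) + 1 - (2 ^ k + 1) = 2 ^ k by rw [pow_succ]; omega,
      nsmul_eq_mul] at h2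
    calc ((2:ℝ) ^ (k+1)) ^ β * Ψ (2 ^ (k+1)) ^ α
        = 2 * 2 ^ β * (((2 ^ k : ℕ) : ℝ) * (((2:ℝ) ^ k) ^ β / 2 ^ (k+1) * Ψ (2 ^ (k+1)) ^ α)) := by
          rw [pow_succ, Real.mul_rpow (by positivity) (by positivity)]
          push_cast
          field_simp
      _ ≤ _ := by gcongr
  have hpart : ∀ K : ℕ, ∑ k ∈ Finset.range K, ∑ n ∈ Finset.Ico (2 ^ k + 1) (2 ^ (k+1) + 1), F n =
      ∑ n ∈ Finset.Ico 2 (2 ^ K + 1), F n := by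
    intro K
    induction K with
    | zero => simp
    | succ K ih =>
      rw [Finset.sum_range_succ, ih, Finset.sum_Ico_consecutive]
      · have := Nat.one_le_two_pow (n := K); omega
      · rw [pow_succ]; omega
  refine summable_of_sum_range_le (c := 2 * 2 ^ β * ∑' n, F n) (fun k => ?_) (fun K => ?_)
  · have := hΨ (2 ^ (k+1)); positivity
  · refine (Finset.sum_le_sum fun k _ => hblock k).trans ?_
    rw [← Finset.mul_sum, hpart]
    have := hs.sum_le_tsum (Finset.Ico 2 (2 ^ K + 1)) (fun n _ => hF0 n)
    gcongr

theorem wapprox_sub (d : ℕ) (Ψ : ℕ → ℝ) (hΨ : ∀ n, 0 < Ψ n) (hanti : Antitone Ψ)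
    (x : EuclideanSpace ℝ (Fin d))
    (hx : {pq : (Fin d → ℤ) × ℕ | 0 < pq.2 ∧
        ∀ i, |x i - (pq.1 i : ℝ) / (pq.2 : ℝ)| ≤ Ψ pq.2}.Infinite) :
    ∃ᶠ k : ℕ in atTop, x ∈ nearRat d (2 ^ (k+1)) (Ψ (2 ^ k)) := by
  by_contra hcon
  rw [not_frequently, eventually_atTop] at hcon
  obtain ⟨K, hK⟩ := hcon
  apply hx
  obtain ⟨N, hN⟩ := exists_nat_ge (2 ^ K * (‖x‖ + Ψ 0))
  refine ((Set.finite_Icc (fun _ : Fin d => -(N:ℤ)) (fun _ => (N:ℤ))).prod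
    (Set.finite_Iio (2 ^ K))).subset ?_
  rintro ⟨z, q⟩ ⟨hq, hz⟩
  simp only at hq hz
  have hqK : q < 2 ^ K := by
    by_contra hqK
    push Not at hqK
    have h1 : K ≤ Nat.log 2 q := (Nat.le_log_iff_pow_le one_lt_two hq.ne').2 hqK
    refine hK _ h1 ⟨(z, q), hq, ?_, fun i => (hz i).trans (hanti (Nat.pow_log_le_self 2 hq.ne'))⟩
    exact_mod_cast (Nat.lt_pow_succ_log_self one_lt_two q).le
  have hzN : ∀ i, |z i| ≤ (N : ℤ) := by
    intro i
    have h1 : |(z i : ℝ) / q| ≤ ‖x‖ + Ψ 0 := by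
      have h2 := PiLp.norm_apply_le x i
      rw [Real.norm_eq_abs] at h2
      have h3 := hz i
      have h4 := hanti (Nat.zero_le q)
      rw [abs_le] at h2 h3 ⊢
      constructor <;> linarith
    have hq' : (0:ℝ) < q := by exact_mod_cast hq
    rw [abs_div, Nat.abs_cast, div_le_iff₀ hq'] at h1
    have h5 : (q:ℝ) ≤ 2 ^ K := by exact_mod_cast hqK.le
    have h6 : |(z i : ℝ)| ≤ N := by
      have : (‖x‖ + Ψ 0) * q ≤ (‖x‖ + Ψ 0) * 2 ^ K := by
        have := hΨ 0
        gcongr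
      linarith
    exact_mod_cast h6
  refine ⟨⟨fun i => ?_, fun i => ?_⟩, hqK⟩
  · exact (abs_le.1 (hzN i)).1
  · exact (abs_le.1 (hzN i)).2

/-- Diophantine statement for affinely irreducible self-similar measures on ℝ^d. -/
theorem self_similar_WPsi_null
    (d : ℕ) (hd : 0 < d) {A : Type*} [Fintype A]
    (φ : A → EuclideanSpace ℝ (Fin d) → EuclideanSpace ℝ (Fin d))
    (hΦ : IsSelfSimilarIFS φ) (hirr : AffinelyIrreducible φ)
    (p : A → ℝ) (hp : ∀ a, 0 < p a) (hp1 : ∑ a, p a = 1)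
    (μ : Measure (EuclideanSpace ℝ (Fin d))) [IsProbabilityMeasure μ]
    (hstat : μ = ∑ a, ENNReal.ofReal (p a) • Measure.map (φ a) μ) :
    ∃ α : ℝ, 0 < α ∧
      ∀ Ψ : ℕ → ℝ, (∀ n, 0 < Ψ n) → Antitone Ψ →
        (Summable fun n : ℕ => (n : ℝ) ^ (α * ((d : ℝ) + 1) / d - 1) * Ψ n ^ α) →
        μ (WApprox d Ψ) = 0 := by
  classical
  obtain ⟨hcard, hsim, -⟩ := hΦ
  choose r hr using hsim
  have : Nonempty A := Fintype.card_pos_iff.1 (by omega)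
  obtain ⟨a₁, ha₁⟩ := Finite.exists_min r
  obtain ⟨a₂, ha₂⟩ := Finite.exists_max r
  have D : IFSData φ p r (r a₁) (r a₂) μ :=
    { sim := fun a => ⟨(hr a).1, (hr a).2.2⟩
      pos := (hr a₁).1
      lt_one := (hr a₂).2.1
      lo := ha₁
      hi := ha₂
      ppos := hp
      psum := hp1
      stat := hstat }
  obtain ⟨α, C, hα, hC, hdec⟩ := D.decay hirr
  obtain ⟨C', hC', hbound⟩ := D.nearRat_bound hd hα hC hdec
  refine ⟨α, hα, fun Ψ hΨ hanti hsum => ?_⟩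
  have hd' : (0:ℝ) < d := by exact_mod_cast hd
  set β : ℝ := α * ((d:ℝ) + 1) / d with hβ
  have hβ0 : 0 < β := by positivity
  have hcond := condense hα hβ0 Ψ hΨ hanti hsum
  have hle : ∀ k : ℕ, μ (nearRat d (2 ^ (k+1)) (Ψ (2 ^ k))) ≤
      ENNReal.ofReal (C' * 2 ^ β * (((2:ℝ) ^ k) ^ β * Ψ (2 ^ k) ^ α)) := by
    intro k
    refine (hbound (2 ^ (k+1)) (Ψ (2 ^ k)) (one_le_pow₀ one_le_two) (hΨ _)).trans (le_of_eq ?_)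
    congr 1
    have h1 := hΨ (2 ^ k)
    rw [Real.mul_rpow h1.le (by positivity), ← Real.rpow_mul (by positivity),
      show ((d:ℝ) + 1) / d * α = β by rw [hβ]; ring, pow_succ,
      Real.mul_rpow (by positivity) (by positivity)]
    ring
  have hfin : ∑' k : ℕ, μ (nearRat d (2 ^ (k+1)) (Ψ (2 ^ k))) ≠ ⊤ := by
    refine ne_top_of_le_ne_top ?_ (ENNReal.tsum_le_tsum hle)
    exact (hcond.mul_left _).tsum_ofReal_ne_top
  refine measure_mono_null ?_ (measure_limsup_atTop_eq_zero hfin)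
  intro x hx
  rw [Filter.mem_limsup_iff_frequently_mem]
  exact wapprox_sub d Ψ hΨ hanti x hx
end
end

section
/- Let μ be a non-atomic self-conformal measure on ℝ (i.e. d = 1). Then there exists α > 0 such that for all β > α, the set of x ∈ ℝ for which |x − p/q| ≤ q^{−2}(log q)^{−β} holds for infinitely many pairs (p,q) ∈ ℤ × ℕ with q ≥ 2 has μ-measure zero. -/
noncomputable section
open MeasureTheory Metric Filter Topology

variable {E : Type*} [NormedAddCommGroup E] [NormedSpace ℝ E]

/-- Stationarity evaluated on a measurable set. -/
lemma scl_stat {A : Type*} [Fintype A] {φ : A → ℝ → ℝ} {p : A → ℝ} (hp : ∀ a, 0 < p a)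
    {μ : Measure ℝ} [IsProbabilityMeasure μ]
    (hstat : μ = ∑ a, ENNReal.ofReal (p a) • Measure.map (φ a) μ)
    (hφ : ∀ a, Measurable (φ a)) {S : Set ℝ} (hS : MeasurableSet S) :
    μ.real S = ∑ a, p a * μ.real (φ a ⁻¹' S) := by
  have h1 : μ S = ∑ a, ENNReal.ofReal (p a) * μ (φ a ⁻¹' S) := by
    conv_lhs => rw [hstat]
    rw [Measure.finsetSum_apply]
    refine Finset.sum_congr rfl fun a _ => ?_
    rw [Measure.smul_apply, Measure.map_apply (hφ a) hS, smul_eq_mul]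
  rw [measureReal_def, h1, ENNReal.toReal_sum]
  · refine Finset.sum_congr rfl fun a _ => ?_
    rw [ENNReal.toReal_mul, ENNReal.toReal_ofReal (hp a).le, measureReal_def]
  · intro a _
    exact ENNReal.mul_ne_top ENNReal.ofReal_ne_top (measure_ne_top _ _)

lemma scl_mvt {g : ℝ → ℝ} (hg : Differentiable ℝ g) {R m M : ℝ}
    (h : ∀ x ∈ Set.Icc (-R) R, m ≤ |deriv g x| ∧ |deriv g x| ≤ M) :
    ∀ x ∈ Set.Icc (-R) R, ∀ y ∈ Set.Icc (-R) R,
      m * |x - y| ≤ |g x - g y| ∧ |g x - g y| ≤ M * |x - y| := by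
  have key : ∀ x ∈ Set.Icc (-R) R, ∀ y ∈ Set.Icc (-R) R, x < y →
      m * |x - y| ≤ |g x - g y| ∧ |g x - g y| ≤ M * |x - y| := by
    intro x hx y hy hxy
    obtain ⟨z, hz, hz2⟩ := exists_deriv_eq_slope g hxy hg.continuous.continuousOn
      hg.differentiableOn
    have hzK : z ∈ Set.Icc (-R) R := ⟨hx.1.trans hz.1.le, hz.2.le.trans hy.2⟩
    have he : |g x - g y| = |deriv g z| * |x - y| := by
      rw [hz2, ← abs_mul]
      have : y - x ≠ 0 := (sub_pos.2 hxy).ne'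
      rw [abs_sub_comm (g x)]
      rw [abs_mul, abs_sub_comm x y, ← abs_mul]
      congr 1
      field_simp
    rw [he]
    exact ⟨mul_le_mul_of_nonneg_right (h z hzK).1 (abs_nonneg _),
      mul_le_mul_of_nonneg_right (h z hzK).2 (abs_nonneg _)⟩
  intro x hx y hy
  rcases lt_trichotomy x y with hxy | hxy | hxy
  · exact key x hx y hy hxy
  · subst hxy; simp
  · have := key y hy x hx hxy
    rwa [abs_sub_comm y x, abs_sub_comm (g y)] at this

/-- One-sided exclusion step. -/
lemma scl_excl {A : Type*} [Fintype A] {φ : A → ℝ → ℝ} {p : A → ℝ} (hp : ∀ a, 0 < p a)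
    (hp1 : ∑ a, p a = 1)
    {μ : Measure ℝ} [IsProbabilityMeasure μ]
    (hstat : μ = ∑ a, ENNReal.ofReal (p a) • Measure.map (φ a) μ)
    (hφ : ∀ a, Measurable (φ a)) {K : Set ℝ} (hK : MeasurableSet K) (hμK : μ.real Kᶜ = 0)
    {c : ℝ} (hc0 : 0 < c) (hc1 : c < 1)
    (hc : ∀ a, ∀ x ∈ K, ∀ y ∈ K, c * |x - y| ≤ |φ a x - φ a y|)
    {δ m : ℝ} (hδ : 0 ≤ δ)
    (H : ∀ S, MeasurableSet S → S ⊆ K → (∀ x ∈ S, ∀ y ∈ S, |x - y| ≤ δ) → μ.real S ≤ m)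
    (a : A) (n : ℕ) :
    ∀ S, MeasurableSet S → S ⊆ K → (∀ x ∈ S, ∀ y ∈ S, |x - y| ≤ c ^ n * δ) →
      (∀ y ∈ K, (φ a)^[n] y ∉ S) → μ.real S ≤ (1 - p a ^ n) * m := by
  induction n with
  | zero =>
    intro S hS hSK _ hd
    have : S = ∅ := by
      ext y; simp only [Set.mem_empty_iff_false, iff_false]
      intro hy; exact hd y (hSK hy) (by simpa using hy)
    simp [this]
  | succ n ih =>
    intro S hS hSK hdiam hd
    have hcut : ∀ b, μ.real (φ b ⁻¹' S) ≤ μ.real (φ b ⁻¹' S ∩ K) := by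
      intro b
      have : φ b ⁻¹' S ⊆ (φ b ⁻¹' S ∩ K) ∪ Kᶜ := by
        intro x hx
        by_cases hxK : x ∈ K
        · exact Or.inl ⟨hx, hxK⟩
        · exact Or.inr hxK
      calc _ ≤ μ.real ((φ b ⁻¹' S ∩ K) ∪ Kᶜ) := measureReal_mono this
        _ ≤ _ := measureReal_union_le _ _
        _ = _ := by rw [hμK, add_zero]
    have hdm : ∀ b, ∀ x ∈ φ b ⁻¹' S ∩ K, ∀ y ∈ φ b ⁻¹' S ∩ K, |x - y| ≤ c ^ n * δ := by
      intro b x hx y hy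
      have h1 := hc b x hx.2 y hy.2
      have h2 := hdiam _ hx.1 _ hy.1
      rw [pow_succ] at h2
      have : c * |x - y| ≤ c * (c ^ n * δ) := by linarith
      exact le_of_mul_le_mul_left this hc0
    have hms : ∀ b, MeasurableSet (φ b ⁻¹' S ∩ K) := fun b => (hφ b hS).inter hK
    have hcn : c ^ n * δ ≤ δ := mul_le_of_le_one_left hδ (pow_le_one₀ hc0.le hc1.le)
    have hb : ∀ b, μ.real (φ b ⁻¹' S) ≤ m := fun b =>
      (hcut b).trans (H _ (hms b) Set.inter_subset_right
        fun x hx y hy => (hdm b x hx y hy).trans hcn)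
    have ha : μ.real (φ a ⁻¹' S) ≤ (1 - p a ^ n) * m := by
      refine (hcut a).trans (ih _ (hms a) Set.inter_subset_right (hdm a) ?_)
      intro y hy hy2
      refine hd y hy ?_
      rw [Function.iterate_succ_apply']
      exact hy2.1
    classical
    rw [scl_stat hp hstat hφ hS]
    rw [← Finset.add_sum_erase _ _ (Finset.mem_univ a)] at hp1 ⊢
    have h3 : ∑ b ∈ Finset.univ.erase a, p b * μ.real (φ b ⁻¹' S)
        ≤ ∑ b ∈ Finset.univ.erase a, p b * m :=
      Finset.sum_le_sum fun b _ => mul_le_mul_of_nonneg_left (hb b) (hp b).le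
    rw [← Finset.sum_mul] at h3
    have h4 : ∑ b ∈ Finset.univ.erase a, p b = 1 - p a := by linarith
    rw [h4] at h3
    have h5 := mul_le_mul_of_nonneg_left ha (hp a).le
    calc _ ≤ p a * ((1 - p a ^ n) * m) + (1 - p a) * m := add_le_add h5 h3
      _ = _ := by ring

/-- Hölder regularity of the measure. -/
lemma scl_holder {A : Type*} [Fintype A] {φ : A → ℝ → ℝ} {p : A → ℝ} (hp : ∀ a, 0 < p a)
    (hp1 : ∑ a, p a = 1)
    {μ : Measure ℝ} [IsProbabilityMeasure μ]
    (hstat : μ = ∑ a, ENNReal.ofReal (p a) • Measure.map (φ a) μ)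
    (hφ : ∀ a, Measurable (φ a)) {R : ℝ} (hμK : μ.real (Set.Icc (-R) R)ᶜ = 0)
    {c ρ : ℝ} (hc0 : 0 < c) (hc1 : c < 1) (hρ0 : 0 < ρ) (hρ1 : ρ < 1)
    (hc : ∀ a, ∀ x ∈ Set.Icc (-R) R, ∀ y ∈ Set.Icc (-R) R, c * |x - y| ≤ |φ a x - φ a y|)
    (hρ : ∀ a x y, |φ a x - φ a y| ≤ ρ * |x - y|)
    {a₁ a₂ : A} {x₁ x₂ : ℝ} (hx₁ : φ a₁ x₁ = x₁) (hx₂ : φ a₂ x₂ = x₂) (hne : x₁ ≠ x₂)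
    (hx₁K : x₁ ∈ Set.Icc (-R) R) (hx₂K : x₂ ∈ Set.Icc (-R) R) :
    ∃ C γ : ℝ, 1 ≤ C ∧ 0 < γ ∧ ∀ δ : ℝ, 0 < δ → ∀ S, MeasurableSet S → S ⊆ Set.Icc (-R) R →
      (∀ x ∈ S, ∀ y ∈ S, |x - y| ≤ δ) → μ.real S ≤ C * δ ^ γ := by
  set K := Set.Icc (-R) R with hKdef
  have hKm : MeasurableSet K := measurableSet_Icc
  set d := |x₁ - x₂| with hd
  have hd0 : 0 < d := abs_pos.2 (sub_ne_zero.2 hne)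
  have hR0 : 0 ≤ R := by linarith [hx₁K.1, hx₁K.2]
  obtain ⟨n, hn⟩ : ∃ n : ℕ, ρ ^ n * (2 * R) < d / 4 ∧ 1 ≤ n := by
    have h1 : Tendsto (fun n : ℕ => ρ ^ n * (2 * R)) atTop (𝓝 (0 * (2 * R))) :=
      (tendsto_pow_atTop_nhds_zero_of_lt_one hρ0.le hρ1).mul_const _
    rw [zero_mul] at h1
    have h2 := h1.eventually (gt_mem_nhds (show (0:ℝ) < d / 4 by positivity))
    exact (h2.and (eventually_ge_atTop 1)).exists
  obtain ⟨hn, hn1⟩ := hn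
  have hit : ∀ a x, φ a x = x → x ∈ K → ∀ y ∈ K, |(φ a)^[n] y - x| ≤ d / 4 := by
    intro a x hx hxK y hy
    have : ∀ k : ℕ, |(φ a)^[k] y - x| ≤ ρ ^ k * |y - x| := by
      intro k
      induction k with
      | zero => simp
      | succ k ih =>
        rw [Function.iterate_succ_apply']
        calc _ = |φ a ((φ a)^[k] y) - φ a x| := by rw [hx]
          _ ≤ ρ * |(φ a)^[k] y - x| := hρ _ _ _
          _ ≤ ρ * (ρ ^ k * |y - x|) := by gcongr
          _ = _ := by ring
    have h2 : |y - x| ≤ 2 * R := abs_le.2 ⟨by linarith [hy.1, hxK.2], by linarith [hy.2, hxK.1]⟩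
    calc _ ≤ _ := this n
      _ ≤ ρ ^ n * (2 * R) := by gcongr
      _ ≤ _ := hn.le
  set κ := min (1/2) (min (p a₁ ^ n) (p a₂ ^ n)) with hκ
  have hκ0 : 0 < κ := by
    have := hp a₁
    have := hp a₂
    positivity
  have hκ2 : κ ≤ 1/2 := min_le_left _ _
  have hκa : κ ≤ p a₁ ^ n := (min_le_right _ _).trans (min_le_left _ _)
  have hκb : κ ≤ p a₂ ^ n := (min_le_right _ _).trans (min_le_right _ _)
  set η := c ^ n with hη
  have hη0 : 0 < η := by positivity
  have hη1 : η < 1 := pow_lt_one₀ hc0.le hc1 (by omega)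
  set θ := 1 - κ with hθ
  have hθ0 : 0 < θ := by linarith
  have hθ1 : θ < 1 := by linarith
  have step : ∀ k : ℕ, ∀ S, MeasurableSet S → S ⊆ K →
      (∀ x ∈ S, ∀ y ∈ S, |x - y| ≤ η ^ k * (d / 4)) → μ.real S ≤ θ ^ k := by
    intro k
    induction k with
    | zero => intro S _ _ _; simpa using measureReal_le_one
    | succ k ih =>
      intro S hS hSK hdm
      have hdm' : ∀ x ∈ S, ∀ y ∈ S, |x - y| ≤ c ^ n * (η ^ k * (d / 4)) := by
        intro x hx y hy
        have := hdm x hx y hy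
        rw [pow_succ] at this
        calc _ ≤ _ := this
          _ = _ := by rw [← hη]; ring
      have hm0 : 0 ≤ θ ^ k := by positivity
      have hex := fun a => scl_excl hp hp1 hstat hφ hKm hμK hc0 hc1 hc
        (show 0 ≤ η ^ k * (d / 4) by positivity) ih a n S hS hSK hdm'
      by_cases h1 : ∀ y ∈ K, (φ a₁)^[n] y ∉ S
      · calc _ ≤ _ := hex a₁ h1
          _ ≤ θ * θ ^ k := by gcongr; linarith
          _ = _ := by ring
      by_cases h2 : ∀ y ∈ K, (φ a₂)^[n] y ∉ S
      · calc _ ≤ _ := hex a₂ h2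
          _ ≤ θ * θ ^ k := by gcongr; linarith
          _ = _ := by ring
      exfalso
      push Not at h1 h2
      obtain ⟨y, hy, hyS⟩ := h1
      obtain ⟨z, hz, hzS⟩ := h2
      have e1 := hit a₁ x₁ hx₁ hx₁K y hy
      have e2 := hit a₂ x₂ hx₂ hx₂K z hz
      have e3 := hdm _ hyS _ hzS
      have e4 : η ^ (k+1) * (d/4) ≤ d / 4 :=
        mul_le_of_le_one_left (by positivity) (pow_le_one₀ hη0.le hη1.le)
      have e5 : d ≤ 3 * (d / 4) := by
        have e6 := e3.trans e4
        rw [abs_le] at e1 e2 e6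
        conv_lhs => rw [hd]
        rw [abs_le]
        constructor <;> linarith [e1.1, e1.2, e2.1, e2.2, e6.1, e6.2]
      linarith
  set γ := Real.log θ / Real.log η with hγ
  have hlη : Real.log η < 0 := Real.log_neg hη0 hη1
  have hγ0 : 0 < γ := div_pos_of_neg_of_neg (Real.log_neg hθ0 hθ1) hlη
  have hηγ : η ^ γ = θ := by
    rw [Real.rpow_def_of_pos hη0, hγ, mul_div_cancel₀ _ hlη.ne, Real.exp_log hθ0]
  refine ⟨max 1 (θ⁻¹ * (d/4)⁻¹ ^ γ), γ, le_max_left _ _, hγ0, ?_⟩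
  intro δ hδ S hS hSK hdm
  have hmain : μ.real S ≤ θ⁻¹ * (δ / (d/4)) ^ γ := by
    rcases le_or_gt (d/4) δ with h | h
    · have h1 : 1 ≤ (δ / (d/4)) ^ γ :=
        Real.one_le_rpow ((one_le_div (by positivity)).2 h) hγ0.le
      have h2 : 1 ≤ θ⁻¹ := (one_le_inv₀ hθ0).2 hθ1.le
      calc _ ≤ (1:ℝ) := measureReal_le_one
        _ ≤ _ := one_le_mul_of_one_le_of_one_le h2 h1
    · have h1 : 0 < δ / (d/4) := by positivity
      obtain ⟨k, hk1, hk2⟩ := exists_nat_pow_near_of_lt_one h1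
        ((div_le_one (by positivity)).2 h.le) hη0 hη1
      have h3 : δ ≤ η ^ k * (d/4) := (div_le_iff₀ (by positivity)).1 hk2
      calc _ ≤ θ ^ k := step k S hS hSK fun x hx y hy => (hdm x hx y hy).trans h3
        _ = θ⁻¹ * θ ^ (k+1) := by field_simp; ring
        _ = θ⁻¹ * (η ^ (k+1)) ^ γ := by
          rw [← hηγ, ← Real.rpow_natCast, ← Real.rpow_natCast, ← Real.rpow_mul hη0.le,
            ← Real.rpow_mul hη0.le, mul_comm γ]
        _ ≤ _ := by gcongr
  calc _ ≤ _ := hmain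
    _ = (θ⁻¹ * (d/4)⁻¹ ^ γ) * δ ^ γ := by
      rw [div_eq_mul_inv, Real.mul_rpow hδ.le (by positivity)]; ring
    _ ≤ _ := by gcongr; exact le_max_right _ _

/-- Base case: a map with two-sided derivative bounds at scale `r`. -/
lemma scl_base {μ : Measure ℝ} [IsProbabilityMeasure μ] {R : ℝ} (hR : 0 ≤ R)
    (hμK : μ.real (Set.Icc (-R) R)ᶜ = 0) {C γ : ℝ} (hC : 0 ≤ C) (hγ : 0 < γ)
    (hold : ∀ δ : ℝ, 0 < δ → ∀ S, MeasurableSet S → S ⊆ Set.Icc (-R) R →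
      (∀ x ∈ S, ∀ y ∈ S, |x - y| ≤ δ) → μ.real S ≤ C * δ ^ γ)
    {m : ℝ} (hm : 0 < m) {N : ℕ} (hN : R + 3 ≤ N) {r ε : ℝ} (hr : 0 < r) (hε : 0 < ε)
    (hε1 : ε ≤ 1) {X : Set ℝ} (hX : ∀ x ∈ X, ∀ y ∈ X, x ≠ y → r ≤ |x - y|)
    {g : ℝ → ℝ} (hg : Differentiable ℝ g)
    (hder : ∀ x ∈ Set.Icc (-R) R, m * r ≤ |deriv g x| ∧ |deriv g x| ≤ r) :
    μ.real (g ⁻¹' (⋃ x ∈ X, closedBall x (r * ε))) ≤ (2 * N + 1) * (C * (2 * ε / m) ^ γ) := by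
  set K := Set.Icc (-R) R with hK
  have hlip := scl_mvt hg hder
  have h0K : (0:ℝ) ∈ K := ⟨by linarith, hR⟩
  set Y : ℤ → Set ℝ := fun j => ⋃ x ∈ {x ∈ X | ⌊x / r⌋ = j}, closedBall x (r * ε) with hY
  have huniq : ∀ x ∈ X, ∀ y ∈ X, ⌊x / r⌋ = ⌊y / r⌋ → x = y := by
    intro x hx y hy hxy
    by_contra hne
    have h1 := hX x hx y hy hne
    have h2 := Int.abs_sub_lt_one_of_floor_eq_floor hxy
    rw [← sub_div, abs_div, abs_of_pos hr, div_lt_one hr] at h2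
    linarith
  have hYm : ∀ j, MeasurableSet (Y j) := by
    intro j
    have : {x ∈ X | ⌊x / r⌋ = j}.Subsingleton := by
      intro x hx y hy
      exact huniq x hx.1 y hy.1 (hx.2.trans hy.2.symm)
    exact MeasurableSet.biUnion this.finite.countable fun x _ => measurableSet_closedBall
  have hYd : ∀ j, ∀ x ∈ Y j, ∀ y ∈ Y j, |x - y| ≤ 2 * (r * ε) := by
    intro j x hx y hy
    simp only [hY, Set.mem_iUnion, Set.mem_ofPred_eq, exists_prop, mem_closedBall,
      Real.dist_eq] at hx hy
    obtain ⟨u, ⟨hu, hu2⟩, hu3⟩ := hx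
    obtain ⟨v, ⟨hv, hv2⟩, hv3⟩ := hy
    have := huniq u hu v hv (hu2.trans hv2.symm)
    subst this
    rw [abs_le] at *
    constructor <;> linarith [hu3.1, hu3.2, hv3.1, hv3.2]
  set J := Finset.Icc (⌊g 0 / r⌋ - (N:ℤ)) (⌊g 0 / r⌋ + (N:ℤ)) with hJ
  have hsub : g ⁻¹' (⋃ x ∈ X, closedBall x (r * ε)) ⊆ (⋃ j ∈ J, (g ⁻¹' Y j ∩ K)) ∪ Kᶜ := by
    intro z hz
    by_cases hzK : z ∈ K
    swap
    · exact Or.inr hzK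
    left
    simp only [Set.mem_preimage, Set.mem_iUnion, exists_prop, mem_closedBall] at hz
    obtain ⟨x, hx, hxz⟩ := hz
    rw [Real.dist_eq] at hxz
    have h1 := (hlip z hzK 0 h0K).2
    have h2 : |z - 0| ≤ R := by rw [sub_zero, abs_le]; exact hzK
    have h3 : |g z - g 0| ≤ r * R := h1.trans (by gcongr)
    have h4 : |x - g 0| ≤ r * (R + 1) := by
      have : r * ε ≤ r := mul_le_of_le_one_right hr.le hε1
      rw [abs_le] at *
      constructor <;> nlinarith
    have h5 : |x / r - g 0 / r| ≤ R + 1 := by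
      rw [← sub_div, abs_div, abs_of_pos hr, div_le_iff₀ hr]; linarith
    have f1 := Int.floor_le (x / r)
    have f2 := Int.lt_floor_add_one (x / r)
    have f3 := Int.floor_le (g 0 / r)
    have f4 := Int.lt_floor_add_one (g 0 / r)
    rw [abs_le] at h5
    simp only [Set.mem_iUnion, exists_prop]
    refine ⟨⌊x / r⌋, ?_, ?_, hzK⟩
    · rw [hJ, Finset.mem_Icc]
      constructor
      · have : ((⌊g 0 / r⌋ - (N:ℤ) : ℤ) : ℝ) ≤ (⌊x / r⌋ : ℝ) := by
          push_cast; linarith [h5.1, h5.2]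
        exact_mod_cast this
      · have : (⌊x / r⌋ : ℝ) ≤ ((⌊g 0 / r⌋ + (N:ℤ) : ℤ) : ℝ) := by
          push_cast; linarith [h5.1, h5.2]
        exact_mod_cast this
    · simp only [hY, Set.mem_preimage, Set.mem_iUnion, Set.mem_ofPred_eq, exists_prop,
        mem_closedBall, Real.dist_eq]
      exact ⟨x, ⟨hx, rfl⟩, hxz⟩
  have hpiece : ∀ j ∈ J, μ.real (g ⁻¹' Y j ∩ K) ≤ C * (2 * ε / m) ^ γ := by
    intro j _
    refine hold _ (by positivity) _ ((hg.continuous.measurable (hYm j)).inter measurableSet_Icc)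
      Set.inter_subset_right ?_
    intro x hx y hy
    have h1 := (hlip x hx.2 y hy.2).1
    have h2 := hYd j _ hx.1 _ hy.1
    rw [le_div_iff₀ hm]
    have : r * (|x - y| * m) ≤ r * (2 * ε) := by linarith
    exact le_of_mul_le_mul_left this hr
  have hcard : (J.card : ℝ) = 2 * N + 1 := by
    rw [hJ, Int.card_Icc]
    have : (⌊g 0 / r⌋ + (N:ℤ) + 1 - (⌊g 0 / r⌋ - (N:ℤ))).toNat = 2 * N + 1 := by omega
    rw [this]; push_cast; ring
  calc _ ≤ μ.real ((⋃ j ∈ J, (g ⁻¹' Y j ∩ K)) ∪ Kᶜ) := measureReal_mono hsub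
    _ ≤ μ.real (⋃ j ∈ J, (g ⁻¹' Y j ∩ K)) + μ.real Kᶜ := measureReal_union_le _ _
    _ = μ.real (⋃ j ∈ J, (g ⁻¹' Y j ∩ K)) := by rw [hμK, add_zero]
    _ ≤ ∑ j ∈ J, μ.real (g ⁻¹' Y j ∩ K) := measureReal_biUnion_finset_le _ _
    _ ≤ ∑ j ∈ J, C * (2 * ε / m) ^ γ := Finset.sum_le_sum hpiece
    _ = _ := by rw [Finset.sum_const, nsmul_eq_mul, hcard]

/-- Stopping-time recursion: separated families of balls have small measure. -/
lemma scl_sep {A : Type*} [Fintype A] {φ : A → ℝ → ℝ} {p : A → ℝ} (hp : ∀ a, 0 < p a)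
    (hp1 : ∑ a, p a = 1)
    {μ : Measure ℝ} [IsProbabilityMeasure μ]
    (hstat : μ = ∑ a, ENNReal.ofReal (p a) • Measure.map (φ a) μ)
    (hφ : ∀ a, Differentiable ℝ (φ a)) {R : ℝ} (hR : 0 ≤ R)
    (hμK : μ.real (Set.Icc (-R) R)ᶜ = 0)
    (hmaps : ∀ a, ∀ x ∈ Set.Icc (-R) R, φ a x ∈ Set.Icc (-R) R)
    {c ρ : ℝ} (hc0 : 0 < c) (hc1 : c < 1) (hρ0 : 0 < ρ) (hρ1 : ρ < 1)
    (hc : ∀ a, ∀ x ∈ Set.Icc (-R) R, c ≤ |deriv (φ a) x| ∧ |deriv (φ a) x| ≤ ρ)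
    (hρ : ∀ a x y, |φ a x - φ a y| ≤ ρ * |x - y|)
    {H α : ℝ} (hH : 0 < H) (hα : 0 < α)
    (hHol : ∀ a x y, |(|deriv (φ a) x| - |deriv (φ a) y|)| ≤ H * |x - y| ^ α)
    {C γ : ℝ} (hC : 1 ≤ C) (hγ : 0 < γ)
    (hold : ∀ δ : ℝ, 0 < δ → ∀ S, MeasurableSet S → S ⊆ Set.Icc (-R) R →
      (∀ x ∈ S, ∀ y ∈ S, |x - y| ≤ δ) → μ.real S ≤ C * δ ^ γ) :
    ∃ B : ℝ, 0 < B ∧ ∀ r ε : ℝ, 0 < r → r ≤ 1 → 0 < ε → ∀ X : Set ℝ, X.Countable →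
      (∀ x ∈ X, ∀ y ∈ X, x ≠ y → r ≤ |x - y|) →
      μ.real (⋃ x ∈ X, closedBall x (r * ε)) ≤ B * ε ^ γ := by
  set K := Set.Icc (-R) R with hK
  have h0K : (0:ℝ) ∈ K := ⟨by linarith, hR⟩
  -- distortion constant
  have hρα : ρ ^ α < 1 := Real.rpow_lt_one hρ0.le hρ1 hα
  set L := (H / c) / (1 - ρ ^ α) with hL
  have hL0 : 0 < L := div_pos (by positivity) (by linarith)
  have hLe : L * ρ ^ α + H / c = L := by
    have : 1 - ρ ^ α ≠ 0 := by linarith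
    rw [hL]; field_simp; ring
  set D := Real.exp (L * (2 * R) ^ α) with hD
  have hD1 : 1 ≤ D := Real.one_le_exp (by positivity)
  have hD0 : 0 < D := by positivity
  have hdist1 : ∀ a, ∀ x ∈ K, ∀ y ∈ K,
      |deriv (φ a) x| ≤ |deriv (φ a) y| * Real.exp (H / c * |x - y| ^ α) := by
    intro a x hx y hy
    have h1 := (abs_le.1 (hHol a x y)).2
    have h2 := (hc a y hy).1
    have h3 := Real.add_one_le_exp (H / c * |x - y| ^ α)
    have h4 : 0 ≤ H / c * |x - y| ^ α := by positivity
    calc |deriv (φ a) x| ≤ |deriv (φ a) y| + H * |x - y| ^ α := by linarith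
      _ = |deriv (φ a) y| + c * (H / c * |x - y| ^ α) := by field_simp
      _ ≤ |deriv (φ a) y| + |deriv (φ a) y| * (H / c * |x - y| ^ α) := by gcongr
      _ = |deriv (φ a) y| * (H / c * |x - y| ^ α + 1) := by ring
      _ ≤ _ := by gcongr
  obtain ⟨N, hN⟩ := exists_nat_ge (R + 3)
  set m := c / D ^ 2 with hm
  have hm0 : 0 < m := by positivity
  set B := (2 * N + 1) * (C * (2 / m) ^ γ) + 1 with hB
  have hB0 : 0 < B := by positivity
  refine ⟨B, hB0, ?_⟩
  intro r ε hr hr1 hε X hXc hX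
  rcases le_or_gt 1 ε with h1ε | hε1
  · calc _ ≤ (1:ℝ) := measureReal_le_one
      _ ≤ B * ε ^ γ := by
        refine one_le_mul_of_one_le_of_one_le ?_ (Real.one_le_rpow h1ε hγ.le)
        have : 0 ≤ (2 * N + 1) * (C * (2 / m) ^ γ) := by positivity
        linarith
  set S := ⋃ x ∈ X, closedBall x (r * ε) with hS
  have hSm : MeasurableSet S := MeasurableSet.biUnion hXc fun x _ => measurableSet_closedBall
  have hbase : ∀ g : ℝ → ℝ, Differentiable ℝ g →
      (∀ x ∈ K, m * r ≤ |deriv g x| ∧ |deriv g x| ≤ r) → μ.real (g ⁻¹' S) ≤ B * ε ^ γ := by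
    intro g hg hder
    calc _ ≤ _ := scl_base hR hμK (by linarith) hγ hold hm0 hN hr hε hε1.le hX hg hder
      _ = ((2 * N + 1) * (C * (2 / m) ^ γ)) * ε ^ γ := by
        rw [show 2 * ε / m = 2 / m * ε by ring, Real.mul_rpow (by positivity) hε.le]; ring
      _ ≤ _ := by gcongr; linarith
  have hDbd : ∀ g : ℝ → ℝ, (∀ x ∈ K, ∀ y ∈ K,
      |deriv g x| ≤ |deriv g y| * Real.exp (L * |x - y| ^ α)) →
      ∀ x ∈ K, ∀ y ∈ K, |deriv g x| ≤ |deriv g y| * D := by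
    intro g hg x hx y hy
    refine (hg x hx y hy).trans ?_
    have h2 : |x - y| ≤ 2 * R := abs_le.2 ⟨by linarith [hx.1, hy.2], by linarith [hx.2, hy.1]⟩
    rw [hD]
    gcongr
  have hrec : ∀ n : ℕ, ∀ g : ℝ → ℝ, Differentiable ℝ g →
      (∀ x ∈ K, ∀ y ∈ K, |deriv g x| ≤ |deriv g y| * Real.exp (L * |x - y| ^ α)) →
      (∀ x ∈ K, ρ ^ n * |deriv g x| ≤ r) → (∃ x ∈ K, c * r / D ≤ |deriv g x|) →
      μ.real (g ⁻¹' S) ≤ (B * ε ^ γ) := by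
    intro n
    induction n with
    | zero =>
      intro g hg hgd hup ⟨z, hz, hlow⟩
      refine hbase g hg fun x hx => ⟨?_, by simpa using hup x hx⟩
      have := hDbd g hgd z hz x hx
      rw [hm]
      have h2 : c * r / D ≤ |deriv g x| * D := hlow.trans this
      rw [div_le_iff₀ hD0] at h2
      rw [div_mul_eq_mul_div, div_le_iff₀ (by positivity)]
      linarith
    | succ n ih =>
      intro g hg hgd hup hlow
      by_cases hle : ∀ x ∈ K, |deriv g x| ≤ r
      · obtain ⟨z, hz, hlow⟩ := hlow
        refine hbase g hg fun x hx => ⟨?_, hle x hx⟩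
        have := hDbd g hgd z hz x hx
        rw [hm]
        have h2 : c * r / D ≤ |deriv g x| * D := hlow.trans this
        rw [div_le_iff₀ hD0] at h2
        rw [div_mul_eq_mul_div, div_le_iff₀ (by positivity)]
        linarith
      · push Not at hle
        obtain ⟨z, hz, hzr⟩ := hle
        rw [scl_stat hp hstat (fun a => (hφ a).continuous.measurable)
          (hg.continuous.measurable hSm)]
        have hall : ∀ a, μ.real (φ a ⁻¹' (g ⁻¹' S)) ≤ B * ε ^ γ := by
          intro a
          have hder : ∀ x, |deriv (g ∘ φ a) x| = |deriv g (φ a x)| * |deriv (φ a) x| := by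
            intro x
            rw [deriv_comp x (hg _) (hφ a x), abs_mul]
          refine ih (g ∘ φ a) (hg.comp (hφ a)) ?_ ?_ ?_
          · intro x hx y hy
            rw [hder, hder]
            have h1 := hgd _ (hmaps a x hx) _ (hmaps a y hy)
            have h2 := hdist1 a x hx y hy
            have h3 : |φ a x - φ a y| ^ α ≤ ρ ^ α * |x - y| ^ α := by
              rw [← Real.mul_rpow hρ0.le (abs_nonneg _)]
              exact Real.rpow_le_rpow (abs_nonneg _) (hρ a x y) hα.le
            calc _ ≤ (|deriv g (φ a y)| * Real.exp (L * |φ a x - φ a y| ^ α)) *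
                  (|deriv (φ a) y| * Real.exp (H / c * |x - y| ^ α)) := by gcongr
              _ ≤ (|deriv g (φ a y)| * Real.exp (L * (ρ ^ α * |x - y| ^ α))) *
                  (|deriv (φ a) y| * Real.exp (H / c * |x - y| ^ α)) := by gcongr
              _ = |deriv g (φ a y)| * |deriv (φ a) y| *
                  (Real.exp (L * (ρ ^ α * |x - y| ^ α)) * Real.exp (H / c * |x - y| ^ α)) := by
                ring
              _ = _ := by
                rw [← Real.exp_add]
                congr 2
                calc _ = (L * ρ ^ α + H / c) * |x - y| ^ α := by ring
                  _ = _ := by rw [hLe]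
          · intro x hx
            rw [hder]
            have h1 := hup _ (hmaps a x hx)
            have h2 := (hc a x hx).2
            calc _ ≤ ρ ^ n * (|deriv g (φ a x)| * ρ) := by gcongr
              _ = ρ ^ (n+1) * |deriv g (φ a x)| := by ring
              _ ≤ r := h1
          · refine ⟨0, h0K, ?_⟩
            rw [hder]
            have h1 := hDbd g hgd z hz _ (hmaps a 0 h0K)
            have h2 := (hc a 0 h0K).1
            have h3 : r / D ≤ |deriv g (φ a 0)| := by
              rw [div_le_iff₀ hD0]; linarith
            calc c * r / D = r / D * c := by ring
              _ ≤ _ := by gcongr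
        calc _ ≤ ∑ a, p a * (B * ε ^ γ) :=
              Finset.sum_le_sum fun a _ => mul_le_mul_of_nonneg_left (hall a) (hp a).le
          _ = _ := by rw [← Finset.sum_mul, hp1, one_mul]
  obtain ⟨n, hn⟩ := exists_pow_lt_of_lt_one hr hρ1
  have := hrec n id differentiable_id ?_ ?_ ?_
  · simpa using this
  · intro x _ y _
    simp only [deriv_id]
    rw [abs_one, one_mul]
    exact Real.one_le_exp (by positivity)
  · intro x _
    simpa using hn.le
  · refine ⟨0, h0K, ?_⟩
    rw [deriv_id, abs_one, div_le_one hD0]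
    nlinarith

/-- The measure is carried by a compact interval. -/
lemma scl_supp {A : Type*} [Fintype A] {φ : A → ℝ → ℝ} {p : A → ℝ} (hp : ∀ a, 0 < p a)
    (hp1 : ∑ a, p a = 1)
    {μ : Measure ℝ} [IsProbabilityMeasure μ]
    (hstat : μ = ∑ a, ENNReal.ofReal (p a) • Measure.map (φ a) μ)
    (hφ : ∀ a, Measurable (φ a)) {ρ M : ℝ} (hρ0 : 0 < ρ) (hρ1 : ρ < 1)
    (hM : ∀ a x, |φ a x| ≤ ρ * |x| + M) :
    μ.real (Set.Icc (-(M / (1 - ρ) + 1)) (M / (1 - ρ) + 1))ᶜ = 0 := by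
  set T := M / (1 - ρ) with hT
  have hTM : M = T * (1 - ρ) := by
    have : 1 - ρ ≠ 0 := by linarith
    rw [hT]; field_simp
  set U : ℝ → Set ℝ := fun s => {x | T + s < |x|} with hU
  have hUm : ∀ s, MeasurableSet (U s) := fun s => measurableSet_lt measurable_const
    (measurable_id.abs)
  have hstep : ∀ s, μ.real (U s) ≤ μ.real (U (s / ρ)) := by
    intro s
    rw [scl_stat hp hstat hφ (hUm s)]
    calc _ ≤ ∑ a, p a * μ.real (U (s / ρ)) := by
          refine Finset.sum_le_sum fun a _ => mul_le_mul_of_nonneg_left ?_ (hp a).le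
          refine measureReal_mono ?_
          intro x hx
          simp only [hU, Set.mem_preimage, Set.mem_ofPred_eq] at hx ⊢
          have h1 := hM a x
          have h2 : ρ * T + s < ρ * |x| := by
            rw [hTM] at h1; linarith
          have h3 : ρ * (T + s / ρ) < ρ * |x| := by
            rw [mul_add, mul_div_cancel₀ _ hρ0.ne']; exact h2
          exact lt_of_mul_lt_mul_left h3 hρ0.le
      _ = _ := by rw [← Finset.sum_mul, hp1, one_mul]
  have hiter : ∀ n : ℕ, μ.real (U 1) ≤ μ.real (U (1 / ρ ^ n)) := by
    intro n
    induction n with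
    | zero => simp
    | succ n ih =>
      refine ih.trans ((hstep _).trans_eq ?_)
      rw [pow_succ, div_div]
  have hlim : Tendsto (fun n : ℕ => μ.real (U n)) atTop (𝓝 0) := by
    have h1 : Antitone (fun n : ℕ => U n) := by
      intro i j hij x hx
      simp only [hU, Set.mem_ofPred_eq] at hx ⊢
      have : (i:ℝ) ≤ j := by exact_mod_cast hij
      linarith
    have h2 := tendsto_measure_iInter_atTop (μ := μ) (fun n : ℕ => (hUm n).nullMeasurableSet) h1
      ⟨0, measure_ne_top _ _⟩
    have h3 : (⋂ n : ℕ, U n) = ∅ := by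
      ext x
      simp only [hU, Set.mem_iInter, Set.mem_ofPred_eq, Set.mem_empty_iff_false, iff_false]
      intro h
      obtain ⟨n, hn⟩ := exists_nat_ge (|x| - T)
      linarith [h n]
    rw [h3, measure_empty] at h2
    have := (ENNReal.tendsto_toReal ENNReal.zero_ne_top).comp h2
    simpa [measureReal_def, Function.comp_def] using this
  have hle : μ.real (U 1) ≤ 0 := by
    refine ge_of_tendsto' hlim fun k => ?_
    have : Tendsto (fun n : ℕ => 1 / ρ ^ n) atTop atTop := by
      simp only [one_div, ← inv_pow]
      exact tendsto_pow_atTop_atTop_of_one_lt ((one_lt_inv₀ hρ0).2 hρ1)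
    obtain ⟨n, hn⟩ := (this.eventually_ge_atTop (k:ℝ)).exists
    refine (hiter n).trans (measureReal_mono ?_)
    intro x hx
    simp only [hU, Set.mem_ofPred_eq] at hx ⊢
    linarith
  refine le_antisymm (le_trans (measureReal_mono ?_) hle) measureReal_nonneg
  intro x hx
  simp only [hU, Set.mem_ofPred_eq]
  by_contra h
  push Not at h
  exact hx (abs_le.1 h)

/-- Abstract consequence of the IFS hypotheses. -/
lemma scl_main {A : Type*} [Fintype A]
    (φ : A → ℝ → ℝ) (hΦ : IsSelfConformalIFS φ)
    (p : A → ℝ) (hp : ∀ a, 0 < p a) (hp1 : ∑ a, p a = 1)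
    (μ : Measure ℝ) [IsProbabilityMeasure μ]
    (hstat : μ = ∑ a, ENNReal.ofReal (p a) • Measure.map (φ a) μ) :
    ∃ B γ : ℝ, 0 < B ∧ 0 < γ ∧ ∀ r ε : ℝ, 0 < r → r ≤ 1 → 0 < ε → ∀ X : Set ℝ, X.Countable →
      (∀ x ∈ X, ∀ y ∈ X, x ≠ y → r ≤ |x - y|) →
      μ.real (⋃ x ∈ X, closedBall x (r * ε)) ≤ B * ε ^ γ := by
  obtain ⟨_, hcontr, hC1, hconf, ⟨H, α, hH, hα, hHol⟩, a₁, a₂, x₁, x₂, hx₁, hx₂, hne⟩ := hΦ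
  have hdiff : ∀ a, Differentiable ℝ (φ a) := fun a => (hC1 a).differentiable (by norm_num)
  have hmeas : ∀ a, Measurable (φ a) := fun a => (hdiff a).continuous.measurable
  have hnd : ∀ a x, ‖fderiv ℝ (φ a) x‖ = |deriv (φ a) x| := by
    intro a x; rw [← norm_deriv_eq_norm_fderiv, Real.norm_eq_abs]
  choose rr hrr using hcontr
  have hA : (Finset.univ : Finset A).Nonempty := ⟨a₁, Finset.mem_univ _⟩
  obtain ⟨ρ, hρ0, hρ1, hρ⟩ : ∃ ρ : ℝ, 0 < ρ ∧ ρ < 1 ∧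
      ∀ a x y, |φ a x - φ a y| ≤ ρ * |x - y| := by
    refine ⟨Finset.univ.sup' hA rr, ?_, ?_, ?_⟩
    · exact (hrr a₁).1.trans_le (Finset.le_sup' rr (Finset.mem_univ a₁))
    · rw [Finset.sup'_lt_iff]; exact fun a _ => (hrr a).2.1
    · intro a x y
      have h1 := (hrr a).2.2 x y
      have h2 := Finset.le_sup' rr (Finset.mem_univ a)
      simp only [Real.norm_eq_abs] at h1
      exact h1.trans (mul_le_mul_of_nonneg_right h2 (abs_nonneg _))
  obtain ⟨M, hM0, hM⟩ : ∃ M : ℝ, 0 ≤ M ∧ ∀ a, |φ a 0| ≤ M :=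
    ⟨∑ a, |φ a 0|, Finset.sum_nonneg fun _ _ => abs_nonneg _,
      fun a => Finset.single_le_sum (f := fun a => |φ a 0|) (fun _ _ => abs_nonneg _)
        (Finset.mem_univ a)⟩
  have hMM : ∀ a x, |φ a x| ≤ ρ * |x| + M := by
    intro a x
    have h1 := hρ a x 0
    rw [sub_zero] at h1
    have h2 := abs_sub_abs_le_abs_sub (φ a x) (φ a 0)
    linarith [hM a]
  have hμK := scl_supp hp hp1 hstat hmeas hρ0 hρ1 hMM
  have h1ρ : 0 < 1 - ρ := by linarith
  have hT0 : 0 ≤ M / (1 - ρ) := div_nonneg hM0 h1ρ.le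
  have hTM : M = M / (1 - ρ) * (1 - ρ) := by field_simp
  set T := M / (1 - ρ) with hT
  set R := T + 1 with hR
  have hR0 : 0 ≤ R := by linarith
  have hmaps : ∀ a, ∀ x ∈ Set.Icc (-R) R, φ a x ∈ Set.Icc (-R) R := by
    intro a x hx
    have hx' := abs_le.2 hx
    refine abs_le.1 ((hMM a x).trans ?_)
    nlinarith
  have hfix : ∀ a x, φ a x = x → x ∈ Set.Icc (-R) R := by
    intro a x hx
    have h1 := hMM a x
    rw [hx] at h1
    refine abs_le.1 ?_
    by_contra hcon
    push Not at hcon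
    nlinarith
  have hdle : ∀ a x, |deriv (φ a) x| ≤ ρ := by
    intro a x
    have h1 : LipschitzWith ⟨ρ, hρ0.le⟩ (φ a) := LipschitzWith.of_dist_le_mul fun x y => by
      rw [Real.dist_eq, Real.dist_eq]; exact hρ a x y
    have := norm_deriv_le_of_lipschitz (x₀ := x) h1
    rw [Real.norm_eq_abs] at this
    exact this
  have hcont : ∀ a, Continuous fun x => |deriv (φ a) x| := fun a =>
    ((hC1 a).continuous_deriv le_rfl).abs
  have hpos : ∀ a x, 0 < |deriv (φ a) x| := fun a x => by
    rw [← hnd]; exact (hconf a x).1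
  have hmin : ∀ a, ∃ c, 0 < c ∧ ∀ x ∈ Set.Icc (-R) R, c ≤ |deriv (φ a) x| := by
    intro a
    obtain ⟨z, hz, hz2⟩ := (isCompact_Icc (a := -R) (b := R)).exists_isMinOn
      ⟨0, by constructor <;> linarith⟩ (hcont a).continuousOn
    exact ⟨_, hpos a z, fun x hx => hz2 hx⟩
  choose cc hcc0 hcc using hmin
  obtain ⟨c, hc0, hc⟩ : ∃ c : ℝ, 0 < c ∧ ∀ a, ∀ x ∈ Set.Icc (-R) R, c ≤ |deriv (φ a) x| := by
    refine ⟨Finset.univ.inf' hA cc, ?_, ?_⟩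
    · rw [Finset.lt_inf'_iff]; exact fun a _ => hcc0 a
    · intro a x hx
      exact (Finset.inf'_le cc (Finset.mem_univ a)).trans (hcc a x hx)
  have h0K : (0:ℝ) ∈ Set.Icc (-R) R := ⟨by linarith, hR0⟩
  have hc1 : c < 1 := (hc a₁ 0 h0K).trans_lt ((hdle a₁ 0).trans_lt hρ1)
  have hboth : ∀ a, ∀ x ∈ Set.Icc (-R) R, c ≤ |deriv (φ a) x| ∧ |deriv (φ a) x| ≤ ρ :=
    fun a x hx => ⟨hc a x hx, hdle a x⟩
  obtain ⟨C, γ, hC, hγ, hold⟩ := scl_holder hp hp1 hstat hmeas hμK hc0 hc1 hρ0 hρ1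
    (fun a x hx y hy => (scl_mvt (hdiff a) (hboth a) x hx y hy).1) hρ hx₁ hx₂ hne
    (hfix _ _ hx₁) (hfix _ _ hx₂)
  obtain ⟨B, hB, h⟩ := scl_sep hp hp1 hstat hdiff hR0 hμK hmaps hc0 hc1 hρ0 hρ1 hboth hρ hH hα
    (fun a x y => by
      have := hHol a x y
      rwa [hnd, hnd, Real.norm_eq_abs] at this) hC hγ hold
  exact ⟨B, γ, hB, hγ, h⟩

/-- Rationals with denominator in a dyadic range. -/
def sclFrac (k : ℕ) : Set ℝ :=
  {x | ∃ (a : ℤ) (q : ℕ), 2 ^ k ≤ q ∧ q < 2 ^ (k + 1) ∧ x = (a : ℝ) / (q : ℝ)}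

lemma sclFrac_countable (k : ℕ) : (sclFrac k).Countable := by
  refine (Set.countable_range (fun z : ℤ × ℕ => (z.1 : ℝ) / (z.2 : ℝ))).mono ?_
  rintro x ⟨a, q, _, _, rfl⟩
  exact ⟨(a, q), rfl⟩

lemma sclFrac_sep (k : ℕ) : ∀ x ∈ sclFrac k, ∀ y ∈ sclFrac k, x ≠ y →
    1 / (4 * (2 ^ k : ℝ) ^ 2) ≤ |x - y| := by
  rintro x ⟨a, q, hq1, hq2, rfl⟩ y ⟨b, s, hs1, hs2, rfl⟩ hne
  have h2k : 0 < 2 ^ k := by positivity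
  have hq0 : (0:ℝ) < q := by exact_mod_cast (by omega : 0 < q)
  have hs0 : (0:ℝ) < s := by exact_mod_cast (by omega : 0 < s)
  have he : (a : ℝ) / q - b / s = ((a * s - b * q : ℤ) : ℝ) / (q * s) := by
    push_cast; field_simp
  have hz : (a * s - b * q : ℤ) ≠ 0 := by
    intro h
    rw [h] at he
    simp only [Int.cast_zero, zero_div] at he
    exact hne (sub_eq_zero.1 he)
  have hz1 : (1:ℝ) ≤ |((a * s - b * q : ℤ) : ℝ)| := by
    rw [← Int.cast_abs]; exact_mod_cast Int.one_le_abs hz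
  rw [he, abs_div, abs_of_pos (mul_pos hq0 hs0)]
  have hq2' : (q:ℝ) ≤ 2 * 2 ^ k := by
    have : q ≤ 2 * 2 ^ k := by rw [pow_succ] at hq2; omega
    exact_mod_cast this
  have hs2' : (s:ℝ) ≤ 2 * 2 ^ k := by
    have : s ≤ 2 * 2 ^ k := by rw [pow_succ] at hs2; omega
    exact_mod_cast this
  have : (q:ℝ) * s ≤ 4 * (2 ^ k : ℝ) ^ 2 := by
    calc (q:ℝ) * s ≤ (2 * 2 ^ k) * (2 * 2 ^ k) := by gcongr
      _ = _ := by ring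
  gcongr

/-- Log-refined Diophantine statement for self-conformal measures on ℝ. -/
theorem self_conformal_log_null
    {A : Type*} [Fintype A]
    (φ : A → ℝ → ℝ) (hΦ : IsSelfConformalIFS φ)
    (p : A → ℝ) (hp : ∀ a, 0 < p a) (hp1 : ∑ a, p a = 1)
    (μ : Measure ℝ) [IsProbabilityMeasure μ]
    (hstat : μ = ∑ a, ENNReal.ofReal (p a) • Measure.map (φ a) μ)
    (hna : ∀ x, μ {x} = 0) :
    ∃ α : ℝ, 0 < α ∧ ∀ β : ℝ, α < β →
      μ {x : ℝ | {pq : ℤ × ℕ | 2 ≤ pq.2 ∧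
          |x - (pq.1 : ℝ) / (pq.2 : ℝ)| ≤
            (pq.2 : ℝ) ^ (-(2 : ℝ)) * Real.log pq.2 ^ (-β)}.Infinite} = 0 := by
  obtain ⟨B, γ, hB, hγ, hmain⟩ := scl_main φ hΦ p hp hp1 μ hstat
  refine ⟨1 / γ, by positivity, ?_⟩
  intro β hβ
  have hβγ : 1 < β * γ := by rwa [div_lt_iff₀ hγ] at hβ
  have hβ0 : 0 < β := lt_trans (by positivity) hβ
  have hl2 : 0 < Real.log 2 := Real.log_pos (by norm_num)
  set ε : ℕ → ℝ := fun k => 4 * (((k + 1 : ℕ) : ℝ) * Real.log 2) ^ (-β) with hε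
  have hε0 : ∀ k, 0 < ε k := fun k => by
    simp only [hε]; positivity
  set S : ℕ → Set ℝ := fun k => ⋃ x ∈ sclFrac (k + 1),
    closedBall x (1 / (4 * (2 ^ (k + 1) : ℝ) ^ 2) * ε k) with hS
  have hSle : ∀ k, μ.real (S k) ≤ B * ε k ^ γ := by
    intro k
    refine hmain _ _ (by positivity) ?_ (hε0 k) _ (sclFrac_countable _) (sclFrac_sep _)
    rw [div_le_one (by positivity)]
    have : (1:ℝ) ≤ 2 ^ (k + 1) := one_le_pow₀ (by norm_num)
    nlinarith
  have hsum : Summable fun k => B * ε k ^ γ := by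
    have h1 : Summable fun k : ℕ => (((k + 1 : ℕ) : ℝ)) ^ (-(β * γ)) :=
      (summable_nat_add_iff (f := fun k : ℕ => (k : ℝ) ^ (-(β * γ))) 1).2
        (Real.summable_nat_rpow.2 (by linarith))
    have h2 : (fun k => B * ε k ^ γ) = fun k : ℕ =>
        (B * 4 ^ γ * Real.log 2 ^ (-(β * γ))) * (((k + 1 : ℕ) : ℝ)) ^ (-(β * γ)) := by
      funext k
      simp only [hε]
      rw [Real.mul_rpow (by norm_num) (by positivity), ← Real.rpow_mul (by positivity),
        Real.mul_rpow (by positivity) hl2.le, neg_mul]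
      ring
    rw [h2]
    exact h1.mul_left _
  have hfin : ∑' k, μ (S k) ≠ ⊤ := by
    have h1 : ∀ k, μ (S k) ≤ ENNReal.ofReal (B * ε k ^ γ) := fun k => by
      rw [← ofReal_measureReal (measure_ne_top μ (S k))]
      exact ENNReal.ofReal_le_ofReal (hSle k)
    refine ne_top_of_le_ne_top ?_ (ENNReal.tsum_le_tsum h1)
    exact hsum.tsum_ofReal_ne_top
  have hBC : μ {x | ∃ᶠ k in atTop, x ∈ S k} = 0 := measure_setOfPred_frequently_eq_zero hfin
  refine measure_mono_null ?_ hBC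
  intro x hx
  simp only [Set.mem_ofPred_eq] at hx ⊢
  by_contra hnot
  rw [not_frequently, eventually_atTop] at hnot
  obtain ⟨N, hN⟩ := hnot
  refine hx ?_
  set Z : Set (ℤ × ℕ) := ⋃ q ∈ Set.Iio (2 ^ (N + 1)),
    ((fun a : ℤ => (a, q)) '' {a : ℤ | 2 ≤ q ∧ |x - (a : ℝ) / (q : ℝ)| ≤
      (q : ℝ) ^ (-(2 : ℝ)) * Real.log q ^ (-β)}) with hZ
  have hZf : Z.Finite := by
    refine Set.Finite.biUnion (Set.finite_Iio _) fun q _ => Set.Finite.image _ ?_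
    set W := (q : ℝ) ^ (-(2 : ℝ)) * Real.log q ^ (-β)
    refine (Set.finite_Icc ⌊(x - W) * q⌋ ⌈(x + W) * q⌉).subset ?_
    rintro a ⟨hq, ha⟩
    have hq0 : (0:ℝ) < q := by exact_mod_cast (by omega : 0 < q)
    rw [abs_le] at ha
    have h1 : (a:ℝ) ≤ (x + W) * q := by
      rw [← div_le_iff₀ hq0]; linarith [ha.1]
    have h2 : (x - W) * q ≤ (a:ℝ) := by
      rw [← le_div_iff₀ hq0]; linarith [ha.2]
    constructor
    · have := (Int.floor_le _).trans h2
      exact_mod_cast this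
    · have := h1.trans (Int.le_ceil _)
      exact_mod_cast this
  refine hZf.subset ?_
  rintro ⟨a, q⟩ ⟨hq, ha⟩
  simp only at hq ha
  simp only [hZ, Set.mem_iUnion, Set.mem_image, Set.mem_ofPred_eq, exists_prop, Set.mem_Iio]
  refine ⟨q, ?_, a, ⟨hq, ha⟩, rfl⟩
  by_contra hbig
  push Not at hbig
  have hlog1 : 2 ^ Nat.log 2 q ≤ q := Nat.pow_log_le_self 2 (by omega)
  have hlog2 : q < 2 ^ (Nat.log 2 q + 1) := Nat.lt_pow_succ_log_self (by norm_num) q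
  have hlog3 : N + 1 ≤ Nat.log 2 q := Nat.le_log_of_pow_le (by norm_num) hbig
  obtain ⟨k, hk⟩ : ∃ k, Nat.log 2 q = k + 1 := ⟨Nat.log 2 q - 1, by omega⟩
  rw [hk] at hlog1 hlog2 hlog3
  refine hN k (by omega) ?_
  simp only [hS, Set.mem_iUnion, exists_prop, mem_closedBall, Real.dist_eq]
  refine ⟨(a : ℝ) / q, ⟨a, q, hlog1, hlog2, rfl⟩, ha.trans ?_⟩
  have hqr : (2:ℝ) ^ (k + 1) ≤ q := by exact_mod_cast hlog1
  have hq0 : (0:ℝ) < q := lt_of_lt_of_le (by positivity) hqr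
  have hlq : ((k + 1 : ℕ) : ℝ) * Real.log 2 ≤ Real.log q := by
    rw [← Real.log_pow]
    exact Real.log_le_log (by positivity) hqr
  have e1 : Real.log q ^ (-β) ≤ (((k + 1 : ℕ) : ℝ) * Real.log 2) ^ (-β) :=
    Real.rpow_le_rpow_of_nonpos (by positivity) hlq (by linarith)
  have e2 : (q:ℝ) ^ (-(2:ℝ)) ≤ 1 / ((2:ℝ) ^ (k + 1)) ^ 2 := by
    rw [Real.rpow_neg hq0.le, ← one_div]
    have : (q:ℝ) ^ (2:ℝ) = (q:ℝ) ^ 2 := by exact_mod_cast Real.rpow_natCast (q:ℝ) 2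
    rw [this]
    gcongr
  calc (q:ℝ) ^ (-(2:ℝ)) * Real.log q ^ (-β)
      ≤ 1 / ((2:ℝ) ^ (k + 1)) ^ 2 * (((k + 1 : ℕ) : ℝ) * Real.log 2) ^ (-β) := by
        gcongr
    _ = _ := by simp only [hε]; field_simp
end
end
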